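/- arXiv:1211.2224 — 2 statements merged into one kernel-verified Lean document; each statement's English description precedes it below -/
import Mathlib

section
/- Let Ω = (0,h₁)×(0,h₂) with h₁,h₂ > 0 and Γ = {0}×[0,h₂] (one side of the rectangle). Then the sharp constant C₁(Ω,Γ) in the inequality ‖w‖_{L²(Ω)} ≤ C₁‖∇w‖_{L²(Ω)} for all w ∈ H̃¹(Ω,Γ) is equal to (1/π)·max{2h₁, h₂}. -/
open MeasureTheory Real

/-!
With `F s = ∫ t in 0..h₂, w !₂[s, t]`, the Wirtinger inequality on each segment `{s} × [0, h₂]`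
bounds `∫ w²` by `h₂⁻¹ ∫ F²` plus `(h₂ / π)² ∫ (∂₂w)²`. The zero-mean condition on `Γ` says exactly
that `F 0 = 0`, so `∫ F² ≤ (2 h₁ / π)² ∫ F'²`, and Cauchy–Schwarz bounds `F' s ^ 2` by
`h₂ ∫ (∂₁w)²` over the segment. Both one-dimensional inequalities come from completing the square
with the Riccati solution `k tan (k (b - x))`. Sharpness is seen on `sin (π x₁ / (2 h₁))` and
`cos (π x₂ / h₂)`, each of which gives equality in one of the two competing bounds.
-/

section Interval

open Set Filter Topology

variable {a b k : ℝ} {f f' : ℝ → ℝ}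

lemma mul_integral_sq_add_sub_le_integral_sq_deriv_of_riccati {φ φ' : ℝ → ℝ} {c : ℝ} (hab : a ≤ b)
    (hfc : ContinuousOn f (Icc a b)) (hf : ∀ x ∈ Ioo a b, HasDerivAt f (f' x) x)
    (hf' : IntervalIntegrable (fun x => f' x ^ 2) volume a b)
    (hφc : ContinuousOn φ (Icc a b)) (hφ : ∀ x ∈ Ioo a b, HasDerivAt φ (φ' x) x)
    (hriccati : ∀ x ∈ Ioo a b, φ' x + φ x ^ 2 ≤ -c) :
    c * (∫ x in a..b, f x ^ 2) + (φ b * f b ^ 2 - φ a * f a ^ 2) ≤ ∫ x in a..b, f' x ^ 2 := by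
  have hf2 : IntervalIntegrable (fun x => c * f x ^ 2) volume a b :=
    ((hfc.pow 2).const_mul c).intervalIntegrable_of_Icc hab
  have hderiv : ∀ x ∈ Ioo a b,
      HasDerivAt (fun x => φ x * f x ^ 2) (φ' x * f x ^ 2 + φ x * (2 * f x * f' x)) x :=
    fun x hx => by simpa using (hφ x hx).fun_mul ((hf x hx).fun_pow 2)
  have hle : ∀ x ∈ Ioo a b,
      φ' x * f x ^ 2 + φ x * (2 * f x * f' x) ≤ f' x ^ 2 - c * f x ^ 2 := fun x hx => by
    nlinarith [sq_nonneg (f' x - φ x * f x),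
      mul_le_mul_of_nonneg_right (hriccati x hx) (sq_nonneg (f x))]
  have hsub := intervalIntegral.sub_le_integral_of_hasDeriv_right_of_le hab
    (hφc.fun_mul (hfc.fun_pow 2)) (fun x hx => (hderiv x hx).hasDerivWithinAt)
    ((intervalIntegrable_iff_integrableOn_Icc_of_le hab).1 (hf'.sub hf2)) hle
  rw [intervalIntegral.integral_sub hf' hf2, intervalIntegral.integral_const_mul] at hsub
  linarith

lemma hasDerivAt_mul_tan_mul_sub {x : ℝ} (hx : cos (k * (b - x)) ≠ 0) :
    HasDerivAt (fun x => k * tan (k * (b - x))) (-k ^ 2 - (k * tan (k * (b - x))) ^ 2) x := by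
  have hlin : HasDerivAt (fun x => k * (b - x)) (-k) x := by
    simpa using ((hasDerivAt_id x).const_sub b).const_mul k
  refine (((hasDerivAt_tan hx).comp x hlin).const_mul k).congr_deriv ?_
  rw [one_div, ← inv_one_add_tan_sq hx, inv_inv]
  ring

lemma sq_mul_integral_sq_le_of_left_eq_zero (hab : a ≤ b) (hk : 0 ≤ k) (hkab : k * (b - a) < π / 2)
    (hfc : ContinuousOn f (Icc a b)) (hf : ∀ x ∈ Ioo a b, HasDerivAt f (f' x) x)
    (hf' : IntervalIntegrable (fun x => f' x ^ 2) volume a b) (hfa : f a = 0) :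
    k ^ 2 * ∫ x in a..b, f x ^ 2 ≤ ∫ x in a..b, f' x ^ 2 := by
  have hcos : ∀ x ∈ Icc a b, cos (k * (b - x)) ≠ 0 := fun x hx => by
    have hnonneg : 0 ≤ k * (b - x) := mul_nonneg hk (sub_nonneg.2 hx.2)
    have hle : k * (b - x) ≤ k * (b - a) := by gcongr; exact hx.1
    exact (cos_pos_of_mem_Ioo ⟨by linarith [pi_pos], by linarith⟩).ne'
  have hφ : ∀ x ∈ Icc a b, HasDerivAt (fun x => k * tan (k * (b - x))) _ x :=
    fun x hx => hasDerivAt_mul_tan_mul_sub (hcos x hx)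
  simpa [hfa] using mul_integral_sq_add_sub_le_integral_sq_deriv_of_riccati (c := k ^ 2) hab hfc hf
    hf' (fun x hx => (hφ x hx).continuousAt.continuousWithinAt)
    (fun x hx => hφ x (Ioo_subset_Icc_self hx)) (fun x _ => by linarith)

theorem integral_sq_le_of_left_eq_zero (hab : a < b)
    (hfc : ContinuousOn f (Icc a b)) (hf : ∀ x ∈ Ioo a b, HasDerivAt f (f' x) x)
    (hf' : IntervalIntegrable (fun x => f' x ^ 2) volume a b) (hfa : f a = 0) :
    ∫ x in a..b, f x ^ 2 ≤ (2 * (b - a) / π) ^ 2 * ∫ x in a..b, f' x ^ 2 := by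
  have hba : 0 < b - a := sub_pos.2 hab
  have hpos : 0 < π / 2 / (b - a) := by positivity
  have hcritical : (π / 2 / (b - a)) ^ 2 * ∫ x in a..b, f x ^ 2 ≤ ∫ x in a..b, f' x ^ 2 := by
    -- The Riccati solution blows up at `a` for the critical `k`, which is reached from below.
    have htendsto : Tendsto (fun k : ℝ => k ^ 2 * ∫ x in a..b, f x ^ 2) (𝓝[<] (π / 2 / (b - a)))
        (𝓝 ((π / 2 / (b - a)) ^ 2 * ∫ x in a..b, f x ^ 2)) :=
      (Continuous.tendsto (by fun_prop) _).mono_left nhdsWithin_le_nhds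
    refine le_of_tendsto htendsto ?_
    filter_upwards [Ioo_mem_nhdsLT hpos] with k hk
    exact sq_mul_integral_sq_le_of_left_eq_zero hab.le hk.1.le ((lt_div_iff₀ hba).1 hk.2) hfc hf
      hf' hfa
  calc ∫ x in a..b, f x ^ 2
      = (2 * (b - a) / π) ^ 2 * ((π / 2 / (b - a)) ^ 2 * ∫ x in a..b, f x ^ 2) := by field_simp
    _ ≤ (2 * (b - a) / π) ^ 2 * ∫ x in a..b, f' x ^ 2 := by gcongr

theorem integral_sq_le_of_right_eq_zero (hab : a < b)
    (hfc : ContinuousOn f (Icc a b)) (hf : ∀ x ∈ Ioo a b, HasDerivAt f (f' x) x)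
    (hf' : IntervalIntegrable (fun x => f' x ^ 2) volume a b) (hfb : f b = 0) :
    ∫ x in a..b, f x ^ 2 ≤ (2 * (b - a) / π) ^ 2 * ∫ x in a..b, f' x ^ 2 := by
  have hreflect : ∀ g : ℝ → ℝ, ∫ x in a..b, g (a + b - x) = ∫ x in a..b, g x := fun g => by
    simp
  have hint : IntervalIntegrable (fun x => (-f' (a + b - x)) ^ 2) volume a b := by
    simpa using (hf'.comp_sub_left (a + b)).symm
  have hle := integral_sq_le_of_left_eq_zero (f := fun x => f (a + b - x)) hab
    (hfc.comp (by fun_prop) fun x hx => ⟨by linarith [hx.2], by linarith [hx.1]⟩)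
    (fun x hx => (hf _ ⟨by linarith [hx.2], by linarith [hx.1]⟩).comp_const_sub (a + b) x)
    hint (by simpa using hfb)
  simpa only [neg_sq, hreflect fun x => f x ^ 2, hreflect fun x => f' x ^ 2] using hle

lemma integral_sub_const_sq (hf : IntervalIntegrable f volume a b)
    (hf2 : IntervalIntegrable (fun x => f x ^ 2) volume a b) (c : ℝ) :
    ∫ x in a..b, (f x - c) ^ 2 =
      (∫ x in a..b, f x ^ 2) - 2 * c * (∫ x in a..b, f x) + (b - a) * c ^ 2 := by
  have hexpand : ∀ x, (f x - c) ^ 2 = f x ^ 2 - 2 * c * f x + c ^ 2 := fun x => by ring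
  simp only [hexpand]
  rw [intervalIntegral.integral_add (hf2.sub (hf.const_mul _)) intervalIntegrable_const,
    intervalIntegral.integral_sub hf2 (hf.const_mul _), intervalIntegral.integral_const_mul,
    intervalIntegral.integral_const, smul_eq_mul]

lemma sq_integral_le_mul_integral_sq (hab : a ≤ b) (hf : IntervalIntegrable f volume a b)
    (hf2 : IntervalIntegrable (fun x => f x ^ 2) volume a b) :
    (∫ x in a..b, f x) ^ 2 ≤ (b - a) * ∫ x in a..b, f x ^ 2 := by
  have hquadratic : ∀ c : ℝ,
      0 ≤ (b - a) * (c * c) + (-2 * ∫ x in a..b, f x) * c + ∫ x in a..b, f x ^ 2 := fun c => by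
    have hnonneg : 0 ≤ ∫ x in a..b, (f x - c) ^ 2 :=
      intervalIntegral.integral_nonneg hab fun x _ => sq_nonneg _
    rw [integral_sub_const_sq hf hf2] at hnonneg
    linarith
  have hdiscrim := discrim_le_zero hquadratic
  rw [discrim] at hdiscrim
  linarith

lemma integral_sub_apply_midpoint_sq_le (hab : a < b)
    (hfc : ContinuousOn f (Icc a b)) (hf : ∀ x ∈ Ioo a b, HasDerivAt f (f' x) x)
    (hf' : IntervalIntegrable (fun x => f' x ^ 2) volume a b) :
    ∫ x in a..b, (f x - f ((a + b) / 2)) ^ 2 ≤ ((b - a) / π) ^ 2 * ∫ x in a..b, f' x ^ 2 := by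
  set m := (a + b) / 2 with hm
  have ham : a < m := by linarith
  have hmb : m < b := by linarith
  have hgleft : ContinuousOn (fun x => f x - f m) (Icc a m) :=
    (hfc.mono (Icc_subset_Icc_right hmb.le)).sub continuousOn_const
  have hgright : ContinuousOn (fun x => f x - f m) (Icc m b) :=
    (hfc.mono (Icc_subset_Icc_left ham.le)).sub continuousOn_const
  have hm_mem : m ∈ uIcc a b := mem_uIcc_of_le ham.le hmb.le
  have hf'left : IntervalIntegrable (fun x => f' x ^ 2) volume a m :=
    hf'.mono_set (uIcc_subset_uIcc_left hm_mem)
  have hf'right : IntervalIntegrable (fun x => f' x ^ 2) volume m b :=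
    hf'.mono_set (uIcc_subset_uIcc_right hm_mem)
  have hleft := integral_sq_le_of_right_eq_zero ham hgleft
    (fun x hx => (hf x ⟨hx.1, hx.2.trans hmb⟩).sub_const (f m)) hf'left (sub_self _)
  have hright := integral_sq_le_of_left_eq_zero hmb hgright
    (fun x hx => (hf x ⟨ham.trans hx.1, hx.2⟩).sub_const (f m)) hf'right (sub_self _)
  rw [show 2 * (m - a) = b - a by linarith] at hleft
  rw [show 2 * (b - m) = b - a by linarith] at hright
  rw [← intervalIntegral.integral_add_adjacent_intervals
      ((hgleft.fun_pow 2).intervalIntegrable_of_Icc ham.le)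
      ((hgright.fun_pow 2).intervalIntegrable_of_Icc hmb.le),
    ← intervalIntegral.integral_add_adjacent_intervals hf'left hf'right, mul_add]
  exact add_le_add hleft hright

theorem integral_sq_le_sq_integral_div_add (hab : a < b)
    (hfc : ContinuousOn f (Icc a b)) (hf : ∀ x ∈ Ioo a b, HasDerivAt f (f' x) x)
    (hf' : IntervalIntegrable (fun x => f' x ^ 2) volume a b) :
    ∫ x in a..b, f x ^ 2 ≤
      (∫ x in a..b, f x) ^ 2 / (b - a) + ((b - a) / π) ^ 2 * ∫ x in a..b, f' x ^ 2 := by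
  have hmidpoint := integral_sub_apply_midpoint_sq_le hab hfc hf hf'
  rw [integral_sub_const_sq (hfc.intervalIntegrable_of_Icc hab.le)
    ((hfc.pow 2).intervalIntegrable_of_Icc hab.le)] at hmidpoint
  have hmean : ∀ y, 2 * y * (∫ x in a..b, f x) - (b - a) * y ^ 2 ≤
      (∫ x in a..b, f x) ^ 2 / (b - a) := fun y => by
    rw [le_div_iff₀ (sub_pos.2 hab)]
    nlinarith [sq_nonneg ((∫ x in a..b, f x) - (b - a) * y)]
  linarith [hmean (f ((a + b) / 2))]

end Interval

section Planar

open Set Function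

variable {a b c d : ℝ} {U Ux Uy : ℝ → ℝ → ℝ}

lemma hasDerivAt_intervalIntegral_of_continuous {E : Type*} [NormedAddCommGroup E]
    [NormedSpace ℝ E] {F F' : ℝ → ℝ → E} (hF : ∀ s, Continuous (F s))
    (hF' : Continuous (uncurry F')) (hderiv : ∀ s t, HasDerivAt (F · t) (F' s t) s) (s : ℝ) :
    HasDerivAt (fun s => ∫ t in c..d, F s t) (∫ t in c..d, F' s t) s := by
  obtain ⟨M, hM⟩ := ((isCompact_Icc (a := s - 1) (b := s + 1)).prod
    (isCompact_uIcc (a := c) (b := d))).exists_bound_of_continuousOn hF'.continuousOn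
  refine (intervalIntegral.hasDerivAt_integral_of_dominated_loc_of_deriv_le (bound := fun _ => M)
    (Icc_mem_nhds (sub_one_lt s) (lt_add_one s)) (.of_forall fun s => (hF s).aestronglyMeasurable)
    ((hF s).intervalIntegrable _ _) (hF'.uncurry_left s).aestronglyMeasurable
    (.of_forall fun t ht x hx => hM (x, t) ⟨hx, uIoc_subset_uIcc ht⟩) intervalIntegrable_const
    (.of_forall fun t _ x _ => hderiv x t)).2

lemma continuous_integral_sq (hU : Continuous (uncurry U)) :
    Continuous fun s => ∫ t in c..d, U s t ^ 2 :=
  intervalIntegral.continuous_parametric_intervalIntegral_of_continuous' (hU.pow 2) c d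

lemma integral_integral_sq_le_of_hasDerivAt_snd (hab : a ≤ b) (hcd : c < d)
    (hU : Continuous (uncurry U)) (hUy : Continuous (uncurry Uy))
    (hderiv : ∀ s t, HasDerivAt (U s) (Uy s t) t) :
    ∫ s in a..b, ∫ t in c..d, U s t ^ 2 ≤
      (∫ s in a..b, (∫ t in c..d, U s t) ^ 2) / (d - c) +
        ((d - c) / π) ^ 2 * ∫ s in a..b, ∫ t in c..d, Uy s t ^ 2 := by
  have hmean : IntervalIntegrable (fun s => (∫ t in c..d, U s t) ^ 2 / (d - c)) volume a b :=
    (((intervalIntegral.continuous_parametric_intervalIntegral_of_continuous' hU c d).pow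
      2).div_const _).intervalIntegrable _ _
  have henergy : IntervalIntegrable (fun s => ((d - c) / π) ^ 2 * ∫ t in c..d, Uy s t ^ 2)
      volume a b := ((continuous_integral_sq hUy).const_mul _).intervalIntegrable _ _
  calc ∫ s in a..b, ∫ t in c..d, U s t ^ 2
      ≤ ∫ s in a..b, ((∫ t in c..d, U s t) ^ 2 / (d - c) +
          ((d - c) / π) ^ 2 * ∫ t in c..d, Uy s t ^ 2) :=
        intervalIntegral.integral_mono_on hab ((continuous_integral_sq hU).intervalIntegrable _ _)
          (hmean.add henergy) fun s _ =>
          integral_sq_le_sq_integral_div_add hcd (hU.uncurry_left s).continuousOn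
            (fun t _ => hderiv s t) (((hUy.uncurry_left s).pow 2).intervalIntegrable _ _)
    _ = _ := by
        rw [intervalIntegral.integral_add hmean henergy, intervalIntegral.integral_div,
          intervalIntegral.integral_const_mul]

lemma integral_sq_integral_le_of_hasDerivAt_fst (hab : a < b) (hcd : c ≤ d)
    (hU : Continuous (uncurry U)) (hUx : Continuous (uncurry Ux))
    (hderiv : ∀ s t, HasDerivAt (U · t) (Ux s t) s) (hmean : ∫ t in c..d, U a t = 0) :
    ∫ s in a..b, (∫ t in c..d, U s t) ^ 2 ≤
      (2 * (b - a) / π) ^ 2 * ((d - c) * ∫ s in a..b, ∫ t in c..d, Ux s t ^ 2) := by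
  have hF' : Continuous fun s => (∫ t in c..d, Ux s t) ^ 2 :=
    (intervalIntegral.continuous_parametric_intervalIntegral_of_continuous' hUx c d).pow 2
  calc ∫ s in a..b, (∫ t in c..d, U s t) ^ 2
      ≤ (2 * (b - a) / π) ^ 2 * ∫ s in a..b, (∫ t in c..d, Ux s t) ^ 2 :=
        integral_sq_le_of_left_eq_zero hab
          (intervalIntegral.continuous_parametric_intervalIntegral_of_continuous' hU c
            d).continuousOn
          (fun s _ => hasDerivAt_intervalIntegral_of_continuous hU.uncurry_left hUx hderiv s)
          (hF'.intervalIntegrable _ _) hmean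
    _ ≤ (2 * (b - a) / π) ^ 2 * ∫ s in a..b, (d - c) * ∫ t in c..d, Ux s t ^ 2 := by
        gcongr
        exact intervalIntegral.integral_mono_on hab.le (hF'.intervalIntegrable _ _)
          (((continuous_integral_sq hUx).const_mul _).intervalIntegrable _ _) fun s _ =>
          sq_integral_le_mul_integral_sq hcd ((hUx.uncurry_left s).intervalIntegrable _ _)
            (((hUx.uncurry_left s).pow 2).intervalIntegrable _ _)
    _ = _ := by rw [intervalIntegral.integral_const_mul]

lemma integral_integral_sq_add_sq (hUx : Continuous (uncurry Ux)) (hUy : Continuous (uncurry Uy)) :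
    ∫ s in a..b, ∫ t in c..d, (Ux s t ^ 2 + Uy s t ^ 2) =
      (∫ s in a..b, ∫ t in c..d, Ux s t ^ 2) + ∫ s in a..b, ∫ t in c..d, Uy s t ^ 2 := by
  rw [← intervalIntegral.integral_add ((continuous_integral_sq hUx).intervalIntegrable _ _)
    ((continuous_integral_sq hUy).intervalIntegrable _ _)]
  congr! 2 with s
  exact intervalIntegral.integral_add (((hUx.uncurry_left s).pow 2).intervalIntegrable _ _)
    (((hUy.uncurry_left s).pow 2).intervalIntegrable _ _)

lemma integral_integral_sq_nonneg (hab : a ≤ b) (hcd : c ≤ d) :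
    0 ≤ ∫ s in a..b, ∫ t in c..d, U s t ^ 2 :=
  intervalIntegral.integral_nonneg hab fun _ _ =>
    intervalIntegral.integral_nonneg hcd fun _ _ => sq_nonneg _

theorem integral_integral_sq_le_of_integral_left_eq_zero (hab : a < b) (hcd : c < d)
    (hU : Continuous (uncurry U)) (hUx : Continuous (uncurry Ux)) (hUy : Continuous (uncurry Uy))
    (hderivx : ∀ s t, HasDerivAt (U · t) (Ux s t) s) (hderivy : ∀ s t, HasDerivAt (U s) (Uy s t) t)
    (hmean : ∫ t in c..d, U a t = 0) :
    ∫ s in a..b, ∫ t in c..d, U s t ^ 2 ≤ (π⁻¹ * max (2 * (b - a)) (d - c)) ^ 2 *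
      ∫ s in a..b, ∫ t in c..d, (Ux s t ^ 2 + Uy s t ^ 2) := by
  have : 0 < b - a := sub_pos.2 hab
  have hdc : 0 < d - c := sub_pos.2 hcd
  have hX := integral_integral_sq_nonneg (U := Ux) hab.le hcd.le
  have hY := integral_integral_sq_nonneg (U := Uy) hab.le hcd.le
  calc ∫ s in a..b, ∫ t in c..d, U s t ^ 2
      ≤ (∫ s in a..b, (∫ t in c..d, U s t) ^ 2) / (d - c) +
          ((d - c) / π) ^ 2 * ∫ s in a..b, ∫ t in c..d, Uy s t ^ 2 :=
        integral_integral_sq_le_of_hasDerivAt_snd hab.le hcd hU hUy hderivy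
    _ ≤ (2 * (b - a) / π) ^ 2 * ((d - c) * ∫ s in a..b, ∫ t in c..d, Ux s t ^ 2) / (d - c) +
          ((d - c) / π) ^ 2 * ∫ s in a..b, ∫ t in c..d, Uy s t ^ 2 := by
        gcongr
        exact integral_sq_integral_le_of_hasDerivAt_fst hab hcd.le hU hUx hderivx hmean
    _ = (π⁻¹ * (2 * (b - a))) ^ 2 * (∫ s in a..b, ∫ t in c..d, Ux s t ^ 2) +
          (π⁻¹ * (d - c)) ^ 2 * ∫ s in a..b, ∫ t in c..d, Uy s t ^ 2 := by
        field_simp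
    _ ≤ (π⁻¹ * max (2 * (b - a)) (d - c)) ^ 2 * (∫ s in a..b, ∫ t in c..d, Ux s t ^ 2) +
          (π⁻¹ * max (2 * (b - a)) (d - c)) ^ 2 * ∫ s in a..b, ∫ t in c..d, Uy s t ^ 2 := by
        gcongr
        exacts [le_max_left _ _, le_max_right _ _]
    _ = _ := by rw [integral_integral_sq_add_sq hUx hUy, mul_add]

end Planar

section Gradient

lemma norm_gradient_sq_eq_sum {E ι : Type*} [NormedAddCommGroup E] [InnerProductSpace ℝ E]
    [CompleteSpace E] [Fintype ι] (e : OrthonormalBasis ι ℝ E) (w : E → ℝ) (x : E) :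
    ‖gradient w x‖ ^ 2 = ∑ i, fderiv ℝ w x (e i) ^ 2 := by
  simp only [← e.sum_sq_norm_inner_left, gradient, InnerProductSpace.toDual_symm_apply,
    norm_eq_abs, sq_abs]

lemma hasGradientAt_comp_coord {ι : Type*} [Fintype ι] [DecidableEq ι] {u : ℝ → ℝ} {u' : ℝ}
    {x : EuclideanSpace ℝ ι} {i : ι} (hu : HasDerivAt u u' (x i)) :
    HasGradientAt (fun y : EuclideanSpace ℝ ι => u (y i)) (EuclideanSpace.single i u') x := by
  rw [hasGradientAt_iff_hasFDerivAt]
  refine (hu.comp_hasFDerivAt x (EuclideanSpace.proj (𝕜 := ℝ) i).hasFDerivAt).congr_fderiv ?_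
  ext y
  simp [EuclideanSpace.inner_single_left]

lemma norm_gradient_comp_coord_sq {ι : Type*} [Fintype ι] {u : ℝ → ℝ} (hu : Differentiable ℝ u)
    (i : ι) (x : EuclideanSpace ℝ ι) :
    ‖gradient (fun y : EuclideanSpace ℝ ι => u (y i)) x‖ ^ 2 = deriv u (x i) ^ 2 := by
  classical
  rw [(hasGradientAt_comp_coord (hu (x i)).hasDerivAt).gradient]
  simp

lemma hasDerivAt_toLp_update {ι : Type*} [Fintype ι] [DecidableEq ι] (v : ι → ℝ) (i : ι) (s : ℝ) :
    HasDerivAt (fun s => WithLp.toLp 2 (Function.update v i s))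
      (EuclideanSpace.single i (1 : ℝ)) s :=
  (PiLp.hasFDerivAt_toLp 2 _).comp_hasDerivAt s (hasDerivAt_update v i s)

lemma hasDerivAt_vec_fst (s t : ℝ) :
    HasDerivAt (fun s => !₂[s, t]) (EuclideanSpace.single 0 1) s := by
  convert hasDerivAt_toLp_update ![s, t] 0 s using 3
  ext j
  fin_cases j <;> rfl

lemma hasDerivAt_vec_snd (s t : ℝ) :
    HasDerivAt (fun t => !₂[s, t]) (EuclideanSpace.single 1 1) t := by
  convert hasDerivAt_toLp_update ![s, t] 1 t using 3
  ext j
  fin_cases j <;> rfl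

end Gradient

section Rectangle

open Set

/-- The product `I × J`, as a subset of the Euclidean plane. -/
def rectangle (I J : Set ℝ) : Set (EuclideanSpace ℝ (Fin 2)) :=
  {x | x 0 ∈ I ∧ x 1 ∈ J}

lemma setIntegral_rectangle {E : Type*} [NormedAddCommGroup E] [NormedSpace ℝ E] {I J : Set ℝ}
    {g : EuclideanSpace ℝ (Fin 2) → E}
    (hg : IntegrableOn (fun p : ℝ × ℝ => g !₂[p.1, p.2]) (I ×ˢ J)) :
    ∫ x in rectangle I J, g x = ∫ s in I, ∫ t in J, g !₂[s, t] := by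
  let e : ℝ × ℝ ≃ᵐ EuclideanSpace ℝ (Fin 2) :=
    MeasurableEquiv.finTwoArrow.symm.trans (MeasurableEquiv.toLp 2 (Fin 2 → ℝ))
  have he : MeasurePreserving e :=
    (volume_preserving_finTwoArrow ℝ).symm.trans (PiLp.volume_preserving_toLp (Fin 2))
  have hpreimage : e ⁻¹' rectangle I J = I ×ˢ J := rfl
  rw [← he.setIntegral_preimage_emb e.measurableEmbedding, hpreimage]
  exact setIntegral_prod _ hg

variable {a b c d : ℝ}

lemma setIntegral_rectangle_Ioo_of_continuous {g : EuclideanSpace ℝ (Fin 2) → ℝ}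
    (hg : Continuous g) (hab : a ≤ b) (hcd : c ≤ d) :
    ∫ x in rectangle (Ioo a b) (Ioo c d), g x = ∫ s in a..b, ∫ t in c..d, g !₂[s, t] := by
  have hcont : Continuous fun p : ℝ × ℝ => g !₂[p.1, p.2] := hg.comp (by fun_prop)
  have hint : IntegrableOn (fun p : ℝ × ℝ => g !₂[p.1, p.2]) (Ioo a b ×ˢ Ioo c d) :=
    (hcont.continuousOn.integrableOn_compact (isCompact_Icc.prod isCompact_Icc)).mono_set
      (prod_mono Ioo_subset_Icc_self Ioo_subset_Icc_self)
  simp only [setIntegral_rectangle hint, intervalIntegral.integral_of_le hab,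
    intervalIntegral.integral_of_le hcd, integral_Ioc_eq_integral_Ioo]

lemma setIntegral_rectangle_comp_coord_zero {g : ℝ → ℝ} (hg : Continuous g) (hab : a ≤ b)
    (hcd : c ≤ d) :
    ∫ x in rectangle (Ioo a b) (Ioo c d), g (x 0) = (d - c) * ∫ s in a..b, g s := by
  rw [setIntegral_rectangle_Ioo_of_continuous (by fun_prop) hab hcd]
  simp

lemma setIntegral_rectangle_comp_coord_one {g : ℝ → ℝ} (hg : Continuous g) (hab : a ≤ b)
    (hcd : c ≤ d) :
    ∫ x in rectangle (Ioo a b) (Ioo c d), g (x 1) = (b - a) * ∫ t in c..d, g t := by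
  rw [setIntegral_rectangle_Ioo_of_continuous (by fun_prop) hab hcd]
  simp

theorem setIntegral_rectangle_sq_le {w : EuclideanSpace ℝ (Fin 2) → ℝ} (hw : ContDiff ℝ 1 w)
    (hab : a < b) (hcd : c < d) (hmean : ∫ t in c..d, w !₂[a, t] = 0) :
    ∫ x in rectangle (Ioo a b) (Ioo c d), w x ^ 2 ≤ (π⁻¹ * max (2 * (b - a)) (d - c)) ^ 2 *
      ∫ x in rectangle (Ioo a b) (Ioo c d), ‖gradient w x‖ ^ 2 := by
  have hwc : Continuous w := hw.continuous
  have hDw : Continuous (fderiv ℝ w) := hw.continuous_fderiv one_ne_zero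
  have hvec : Continuous fun p : ℝ × ℝ => !₂[p.1, p.2] := by fun_prop
  have hD : ∀ x, HasFDerivAt w (fderiv ℝ w x) x := fun x =>
    (hw.differentiable one_ne_zero x).hasFDerivAt
  simp only [norm_gradient_sq_eq_sum (EuclideanSpace.basisFun (Fin 2) ℝ), Fin.sum_univ_two,
    EuclideanSpace.basisFun_apply]
  rw [setIntegral_rectangle_Ioo_of_continuous (by fun_prop) hab.le hcd.le,
    setIntegral_rectangle_Ioo_of_continuous (by fun_prop) hab.le hcd.le]
  exact integral_integral_sq_le_of_integral_left_eq_zero hab hcd (hwc.comp hvec)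
    ((hDw.comp hvec).clm_apply continuous_const) ((hDw.comp hvec).clm_apply continuous_const)
    (fun s t => (hD _).comp_hasDerivAt s (hasDerivAt_vec_fst s t))
    (fun s t => (hD _).comp_hasDerivAt t (hasDerivAt_vec_snd s t)) hmean

end Rectangle

section TrigIntegrals

variable {k h : ℝ}

lemma integral_sin_mul_sq_eq_half (hk : k ≠ 0) (hkh : sin (k * h) * cos (k * h) = 0) :
    ∫ x in (0 : ℝ)..h, sin (k * x) ^ 2 = h / 2 := by
  rw [intervalIntegral.integral_comp_mul_left (fun x => sin x ^ 2) hk, integral_sin_sq, hkh]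
  simp only [mul_zero, sin_zero, zero_mul, sub_zero, zero_add, smul_eq_mul]
  field_simp

lemma integral_cos_mul_sq_eq_half (hk : k ≠ 0) (hkh : sin (k * h) * cos (k * h) = 0) :
    ∫ x in (0 : ℝ)..h, cos (k * x) ^ 2 = h / 2 := by
  rw [intervalIntegral.integral_comp_mul_left (fun x => cos x ^ 2) hk, integral_cos_sq,
    mul_comm (cos _), hkh]
  simp only [mul_zero, sin_zero, sub_zero, zero_add, smul_eq_mul]
  field_simp

end TrigIntegrals

lemma inv_le_of_sqrt_le_mul_sqrt_sq_mul {k A C : ℝ} (hk : 0 < k) (hA : 0 < A)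
    (h : √A ≤ C * √(k ^ 2 * A)) : k⁻¹ ≤ C := by
  rw [sqrt_mul (sq_nonneg k), sqrt_sq hk.le, ← mul_assoc] at h
  rw [inv_le_iff_one_le_mul₀ hk]
  exact le_of_mul_le_mul_right (by rwa [one_mul]) (sqrt_pos.2 hA)

open Set in
/-- `C` is an admissible constant in the Poincaré inequality on `Ω = (0, h₁) × (0, h₂)` for
functions with zero mean on the side `Γ = {0} × [0, h₂]`; the test functions are restrictions to `Ω`
of `C¹` functions on the plane. -/
def IsOneSidePoincareConstant (h₁ h₂ C : ℝ) : Prop :=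
  ∀ w : EuclideanSpace ℝ (Fin 2) → ℝ, ContDiff ℝ 1 w → (∫ t in (0 : ℝ)..h₂, w !₂[0, t]) = 0 →
    √(∫ x in rectangle (Ioo 0 h₁) (Ioo 0 h₂), w x ^ 2) ≤
      C * √(∫ x in rectangle (Ioo 0 h₁) (Ioo 0 h₂), ‖gradient w x‖ ^ 2)

namespace IsOneSidePoincareConstant

variable {h₁ h₂ C : ℝ}

theorem inv_pi_mul_max (hh₁ : 0 < h₁) (hh₂ : 0 < h₂) :
    IsOneSidePoincareConstant h₁ h₂ (π⁻¹ * max (2 * h₁) h₂) := by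
  intro w hw hmean
  have hle := setIntegral_rectangle_sq_le hw hh₁ hh₂ hmean
  rw [sub_zero, sub_zero] at hle
  refine (sqrt_le_sqrt hle).trans_eq ?_
  rw [sqrt_mul (sq_nonneg _), sqrt_sq (by positivity)]

lemma sqrt_integral_sq_le_of_apply_zero_eq_zero (hC : IsOneSidePoincareConstant h₁ h₂ C)
    (hh₁ : 0 ≤ h₁) (hh₂ : 0 < h₂) {u : ℝ → ℝ} (hu : ContDiff ℝ 1 u) (hu0 : u 0 = 0) :
    √(∫ s in (0 : ℝ)..h₁, u s ^ 2) ≤ C * √(∫ s in (0 : ℝ)..h₁, deriv u s ^ 2) := by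
  have hle := hC (fun x => u (x 0)) (by fun_prop) (by simp [hu0])
  simp only [norm_gradient_comp_coord_sq (hu.differentiable one_ne_zero)] at hle
  rw [setIntegral_rectangle_comp_coord_zero (hu.continuous.fun_pow 2) hh₁ hh₂.le,
    setIntegral_rectangle_comp_coord_zero (g := fun s => deriv u s ^ 2)
      ((hu.continuous_deriv le_rfl).pow 2) hh₁ hh₂.le, sub_zero,
    sqrt_mul hh₂.le, sqrt_mul hh₂.le, mul_left_comm] at hle
  exact le_of_mul_le_mul_left hle (sqrt_pos.2 hh₂)

lemma sqrt_integral_sq_le_of_integral_eq_zero (hC : IsOneSidePoincareConstant h₁ h₂ C)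
    (hh₁ : 0 < h₁) (hh₂ : 0 ≤ h₂) {u : ℝ → ℝ} (hu : ContDiff ℝ 1 u)
    (hmean : ∫ t in (0 : ℝ)..h₂, u t = 0) :
    √(∫ t in (0 : ℝ)..h₂, u t ^ 2) ≤ C * √(∫ t in (0 : ℝ)..h₂, deriv u t ^ 2) := by
  have hle := hC (fun x => u (x 1)) (by fun_prop) hmean
  simp only [norm_gradient_comp_coord_sq (hu.differentiable one_ne_zero)] at hle
  rw [setIntegral_rectangle_comp_coord_one (hu.continuous.fun_pow 2) hh₁.le hh₂,
    setIntegral_rectangle_comp_coord_one (g := fun t => deriv u t ^ 2)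
      ((hu.continuous_deriv le_rfl).pow 2) hh₁.le hh₂, sub_zero,
    sqrt_mul hh₁.le, sqrt_mul hh₁.le, mul_left_comm] at hle
  exact le_of_mul_le_mul_left hle (sqrt_pos.2 hh₁)

theorem two_mul_div_pi_le (hC : IsOneSidePoincareConstant h₁ h₂ C) (hh₁ : 0 < h₁) (hh₂ : 0 < h₂) :
    2 * h₁ / π ≤ C := by
  set k := π / (2 * h₁) with hk_def
  have hk : 0 < k := by positivity
  have hkh : k * h₁ = π / 2 := by rw [hk_def]; field_simp
  have hderiv : ∀ s, deriv (fun s => sin (k * s)) s = k * cos (k * s) := fun s => by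
    simp [mul_comm]
  have hle := hC.sqrt_integral_sq_le_of_apply_zero_eq_zero hh₁.le hh₂ (u := fun s => sin (k * s))
    (by fun_prop) (by simp)
  simp only [hderiv, mul_pow, intervalIntegral.integral_const_mul] at hle
  rw [integral_sin_mul_sq_eq_half hk.ne' (by simp [hkh]),
    integral_cos_mul_sq_eq_half hk.ne' (by simp [hkh])] at hle
  simpa [k] using inv_le_of_sqrt_le_mul_sqrt_sq_mul hk (half_pos hh₁) hle

theorem div_pi_le (hC : IsOneSidePoincareConstant h₁ h₂ C) (hh₁ : 0 < h₁) (hh₂ : 0 < h₂) :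
    h₂ / π ≤ C := by
  set k := π / h₂ with hk_def
  have hk : 0 < k := by positivity
  have hkh : k * h₂ = π := by rw [hk_def]; field_simp
  have hmean : ∫ t in (0 : ℝ)..h₂, cos (k * t) = 0 := by
    simp [intervalIntegral.integral_comp_mul_left cos hk.ne', hkh]
  have hderiv : ∀ t, deriv (fun t => cos (k * t)) t = -k * sin (k * t) := fun t => by
    simp [mul_comm]
  have hle := hC.sqrt_integral_sq_le_of_integral_eq_zero hh₁ hh₂.le (u := fun t => cos (k * t))
    (by fun_prop) hmean
  simp only [hderiv, mul_pow, neg_sq, intervalIntegral.integral_const_mul] at hle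
  rw [integral_sin_mul_sq_eq_half hk.ne' (by simp [hkh]),
    integral_cos_mul_sq_eq_half hk.ne' (by simp [hkh])] at hle
  simpa [k] using inv_le_of_sqrt_le_mul_sqrt_sq_mul hk (half_pos hh₂) hle

end IsOneSidePoincareConstant

/-- The sharp constant `C₁(Ω,Γ)` in the Poincaré type inequality
`‖w‖_{L²(Ω)} ≤ C₁ ‖∇w‖_{L²(Ω)}` for functions with zero mean trace on `Γ`,
where `Ω = (0,h₁) × (0,h₂)` and `Γ = {0} × [0,h₂]` is one side of the rectangle,
equals `(1/π) · max {2h₁, h₂}`. -/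
theorem rectangle_one_side_C1 (h₁ h₂ : ℝ) (hh₁ : 0 < h₁) (hh₂ : 0 < h₂) :
    IsLeast {C : ℝ |
      ∀ w : EuclideanSpace ℝ (Fin 2) → ℝ, ContDiff ℝ 1 w →
        (∫ t in (0:ℝ)..h₂, w !₂[0, t]) = 0 →
        Real.sqrt (∫ x in {x : EuclideanSpace ℝ (Fin 2) |
            x 0 ∈ Set.Ioo 0 h₁ ∧ x 1 ∈ Set.Ioo 0 h₂}, (w x) ^ 2) ≤
          C * Real.sqrt (∫ x in {x : EuclideanSpace ℝ (Fin 2) |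
            x 0 ∈ Set.Ioo 0 h₁ ∧ x 1 ∈ Set.Ioo 0 h₂}, ‖gradient w x‖ ^ 2)}
      (π⁻¹ * max (2 * h₁) h₂) := by
  refine ⟨IsOneSidePoincareConstant.inv_pi_mul_max hh₁ hh₂,
    fun C (hC : IsOneSidePoincareConstant h₁ h₂ C) => ?_⟩
  rw [← div_eq_inv_mul, ← max_div_div_right pi_pos.le]
  exact max_le (hC.two_mul_div_pi_le hh₁ hh₂) (hC.div_pi_le hh₁ hh₂)
end

section
/- Let Ω = (0,h₁)×(0,h₂)×(0,h₃) with h₁,h₂,h₃ > 0 and Γ = ∂Ω ∩ {x₁ = 0} (one face of the parallelepiped), and set m = max{h₂, h₃}. Then the sharp constant C₂(Ω,Γ) in the inequality ‖w‖_{L²(Γ)} ≤ C₂‖∇w‖_{L²(Ω)} for all w ∈ H̃¹(Ω,Γ) is equal to ((π/m)·tanh(π h₁/m))^{-1/2}. -/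
open MeasureTheory Real

/-!
If `φ' = q - φ²`, completing the square in `(φ f²)'` gives
`φ(b) f(b)² - φ(a) f(a)² ≤ ∫ f'² + q f²`. For `φ(x) = -k tanh (k (b - x))` this is the sharp trace
inequality `k tanh (k (b - a)) f(a)² ≤ ∫ f'² + k² f²`. For `φ(x) = k tan (k ((a + b) / 2 - x))` it
is the Wirtinger inequality with Dirichlet conditions, which by duality gives the Poincaré
inequality on an interval, and subadditivity of the variance (Efron–Stein) carries the latter to a
rectangle with constant `k = π / max h₂ h₃`. Applying the trace inequality to `u(·, y) - u(·, y')`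
and integrating over all pairs `(y, y')` replaces every square by a variance over the cross section,
where the Poincaré inequality bounds the `k²` term by the transversal part of the gradient. All
steps are equalities for `cosh (k (h₁ - x₁)) cos (k x₂)`, where `x₂` runs along the longer side.
-/

section Interval

variable {f φ : ℝ → ℝ} {a b k : ℝ}

/-- Completing the square in `(φ f²)' = (q - φ²) f² + 2 φ f f'`. -/
lemma riccati_boundary_le_integral {q : ℝ} (hab : a ≤ b) (hf : ContDiff ℝ 1 f)
    (hφ : ∀ x ∈ Set.uIcc a b, HasDerivAt φ (q - φ x ^ 2) x) :
    φ b * f b ^ 2 - φ a * f a ^ 2 ≤ ∫ x in a..b, (deriv f x ^ 2 + q * f x ^ 2) := by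
  have : Continuous f := hf.continuous
  have : Continuous (deriv f) := hf.continuous_deriv le_rfl
  have : ContinuousOn φ (Set.uIcc a b) := fun x hx =>
    (hφ x hx).continuousAt.continuousWithinAt
  have hderiv : ∀ x ∈ Set.uIcc a b, HasDerivAt (fun x => φ x * f x ^ 2)
      ((q - φ x ^ 2) * f x ^ 2 + φ x * (2 * f x * deriv f x)) x := fun x hx =>
    ((hφ x hx).mul ((hf.differentiable one_ne_zero x).hasDerivAt.pow 2)).congr_deriv (by simp)
  have hint : IntervalIntegrable
      (fun x => (q - φ x ^ 2) * f x ^ 2 + φ x * (2 * f x * deriv f x)) volume a b :=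
    ContinuousOn.intervalIntegrable (by fun_prop)
  rw [← intervalIntegral.integral_eq_sub_of_hasDerivAt hderiv hint]
  refine intervalIntegral.integral_mono_on hab hint
    (Continuous.intervalIntegrable (by fun_prop) _ _) fun x _ => ?_
  linarith [sq_nonneg (deriv f x - φ x * f x)]

lemma hasDerivAt_mul_sub (k c x : ℝ) : HasDerivAt (fun x => k * (c - x)) (-k) x := by
  simpa using ((hasDerivAt_id x).const_sub c).const_mul k

lemma hasDerivAt_mul_tan (k c x : ℝ) (hx : cos (k * (c - x)) ≠ 0) :
    HasDerivAt (fun x => k * tan (k * (c - x))) (-k ^ 2 - (k * tan (k * (c - x))) ^ 2) x := by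
  refine (((hasDerivAt_tan hx).comp x (hasDerivAt_mul_sub k c x)).const_mul k).congr_deriv ?_
  rw [one_div, ← inv_one_add_tan_sq hx, inv_inv]
  ring

lemma hasDerivAt_tanh (x : ℝ) : HasDerivAt tanh (1 - tanh x ^ 2) x := by
  have hcosh := (cosh_pos x).ne'
  rw [show tanh = fun x => sinh x / cosh x from funext tanh_eq_sinh_div_cosh]
  refine ((hasDerivAt_sinh x).div (hasDerivAt_cosh x) hcosh).congr_deriv ?_
  field_simp

lemma hasDerivAt_neg_mul_tanh (k c x : ℝ) :
    HasDerivAt (fun x => -(k * tanh (k * (c - x))))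
      (k ^ 2 - (-(k * tanh (k * (c - x)))) ^ 2) x := by
  refine (((hasDerivAt_tanh _).comp x (hasDerivAt_mul_sub k c x)).const_mul k).neg.congr_deriv ?_
  ring

lemma mul_tanh_mul_sq_le_integral (hab : a ≤ b) (hf : ContDiff ℝ 1 f) :
    k * tanh (k * (b - a)) * f a ^ 2 ≤ ∫ x in a..b, (deriv f x ^ 2 + k ^ 2 * f x ^ 2) := by
  simpa using riccati_boundary_le_integral hab hf fun x _ => hasDerivAt_neg_mul_tanh k b x

lemma sq_mul_integral_sq_le_of_mul_lt_pi (hab : a ≤ b) (hk : 0 ≤ k) (hkπ : k * (b - a) < π)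
    (hf : ContDiff ℝ 1 f) (hfa : f a = 0) (hfb : f b = 0) :
    k ^ 2 * ∫ x in a..b, f x ^ 2 ≤ ∫ x in a..b, deriv f x ^ 2 := by
  have : Continuous (deriv f) := hf.continuous_deriv le_rfl
  have hcos : ∀ x ∈ Set.uIcc a b, cos (k * ((a + b) / 2 - x)) ≠ 0 := fun x hx => by
    rw [Set.uIcc_of_le hab] at hx
    exact (cos_pos_of_mem_Ioo ⟨by nlinarith [hx.2], by nlinarith [hx.1]⟩).ne'
  have hriccati := riccati_boundary_le_integral hab hf fun x hx =>
    hasDerivAt_mul_tan k ((a + b) / 2) x (hcos x hx)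
  rw [intervalIntegral.integral_add (Continuous.intervalIntegrable (by fun_prop) _ _)
    (Continuous.intervalIntegrable (by fun_prop) _ _), intervalIntegral.integral_const_mul,
    hfa, hfb] at hriccati
  linarith

lemma integral_sq_le_of_eq_zero_of_eq_zero (hab : a ≤ b) (hf : ContDiff ℝ 1 f)
    (hfa : f a = 0) (hfb : f b = 0) :
    ∫ x in a..b, f x ^ 2 ≤ ((b - a) / π) ^ 2 * ∫ x in a..b, deriv f x ^ 2 := by
  obtain rfl | hlt := hab.eq_or_lt
  · simp
  have hpos : 0 < b - a := sub_pos.2 hlt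
  have hsub : ∀ k ∈ Set.Ioo 0 (π / (b - a)),
      k ^ 2 * ∫ x in a..b, f x ^ 2 ≤ ∫ x in a..b, deriv f x ^ 2 := fun k hk =>
    sq_mul_integral_sq_le_of_mul_lt_pi hab hk.1.le ((lt_div_iff₀ hpos).1 hk.2) hf hfa hfb
  have hlim : Filter.Tendsto (fun k : ℝ => k ^ 2 * ∫ x in a..b, f x ^ 2)
      (nhdsWithin (π / (b - a)) (Set.Iio (π / (b - a))))
      (nhds ((π / (b - a)) ^ 2 * ∫ x in a..b, f x ^ 2)) :=
    tendsto_nhdsWithin_of_tendsto_nhds (Continuous.tendsto (by fun_prop) _)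
  have hle := le_of_tendsto hlim
    (Filter.eventually_of_mem (Ioo_mem_nhdsLT (div_pos pi_pos hpos)) hsub)
  rwa [← inv_div, inv_pow, inv_mul_le_iff₀ (by positivity)] at hle

lemma integral_sq_eq_neg_integral_mul_deriv {F : ℝ → ℝ} (hf : ContDiff ℝ 1 f)
    (hF : ∀ x, HasDerivAt F (f x) x) (hFa : F a = 0) (hFb : F b = 0) :
    ∫ x in a..b, f x ^ 2 = -∫ x in a..b, F x * deriv f x := by
  rw [intervalIntegral.integral_mul_deriv_eq_deriv_mul (fun x _ => hF x)
    (fun x _ => (hf.differentiable one_ne_zero x).hasDerivAt)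
    (hf.continuous.intervalIntegrable a b) ((hf.continuous_deriv le_rfl).intervalIntegrable a b)]
  simp [hFa, hFb, ← sq]

/-- The primitive of a function of mean zero vanishes at both endpoints, so the inequality dualizes
the one with Dirichlet conditions. -/
lemma integral_sq_le_of_integral_eq_zero (hab : a ≤ b) (hf : ContDiff ℝ 1 f)
    (hf0 : ∫ x in a..b, f x = 0) :
    ∫ x in a..b, f x ^ 2 ≤ ((b - a) / π) ^ 2 * ∫ x in a..b, deriv f x ^ 2 := by
  obtain rfl | hlt := hab.eq_or_lt
  · simp
  set F : ℝ → ℝ := fun x => ∫ t in a..x, f t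
  set c : ℝ := (b - a) / π
  have hc : 0 < c ^ 2 := pow_pos (div_pos (sub_pos.2 hlt) pi_pos) 2
  have hf_cont : Continuous f := hf.continuous
  have : Continuous (deriv f) := hf.continuous_deriv le_rfl
  have hF : ∀ x, HasDerivAt F (f x) x := fun x => (hf_cont.integral_hasStrictDerivAt a x).hasDerivAt
  have hF' : deriv F = f := funext fun x => (hF x).deriv
  have hF_C1 : ContDiff ℝ 1 F :=
    contDiff_one_iff_deriv.2 ⟨fun x => (hF x).differentiableAt, hF' ▸ hf_cont⟩
  have hFa : F a = 0 := intervalIntegral.integral_same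
  have hdirichlet : ∫ x in a..b, F x ^ 2 ≤ c ^ 2 * ∫ x in a..b, f x ^ 2 :=
    hF' ▸ integral_sq_le_of_eq_zero_of_eq_zero hab hF_C1 hFa hf0
  have hparts := integral_sq_eq_neg_integral_mul_deriv hf hF hFa hf0
  have hsq : 0 ≤ (∫ x in a..b, F x ^ 2) + 2 * c ^ 2 * (∫ x in a..b, F x * deriv f x) +
      (c ^ 2) ^ 2 * ∫ x in a..b, deriv f x ^ 2 := by
    simp_rw [← intervalIntegral.integral_const_mul]
    rw [← intervalIntegral.integral_add, ← intervalIntegral.integral_add]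
    · refine intervalIntegral.integral_nonneg hab fun x _ => ?_
      linarith [sq_nonneg (F x + c ^ 2 * deriv f x)]
    all_goals exact Continuous.intervalIntegrable (by fun_prop) _ _
  refine le_of_mul_le_mul_left ?_ hc
  linear_combination hdirichlet + hsq + 2 * c ^ 2 * hparts

end Interval

section SqDeviation

variable {α β : Type*} [MeasurableSpace α] [MeasurableSpace β]

/-- The squared `L²(μ)`-distance from `f` to the constants, an unnormalized variance.
Only meaningful for finite `μ`, as the average is `0` by convention when `μ` is infinite. -/
noncomputable def sqDeviation (μ : Measure α) (f : α → ℝ) : ℝ :=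
  ∫ x, (f x - ⨍ y, f y ∂μ) ^ 2 ∂μ

variable {μ : Measure α} {ν : Measure β}

lemma sqDeviation_nonneg (μ : Measure α) (f : α → ℝ) : 0 ≤ sqDeviation μ f :=
  integral_nonneg fun _ => sq_nonneg _

lemma sqDeviation_of_integral_eq_zero {f : α → ℝ} (hf : ∫ x, f x ∂μ = 0) :
    sqDeviation μ f = ∫ x, f x ^ 2 ∂μ := by
  simp [sqDeviation, average_eq, hf]

variable [IsFiniteMeasure μ] [IsFiniteMeasure ν]

lemma sqDeviation_eq {f : α → ℝ} (hf : MemLp f 2 μ) :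
    sqDeviation μ f = ∫ x, f x ^ 2 ∂μ - (∫ x, f x ∂μ) ^ 2 / μ.real Set.univ := by
  have hint : Integrable f μ := hf.integrable one_le_two
  have hexpand : ∀ c, ∫ x, (f x - c) ^ 2 ∂μ =
      ∫ x, f x ^ 2 ∂μ - 2 * c * ∫ x, f x ∂μ + c ^ 2 * μ.real Set.univ := fun c => by
    simp_rw [show ∀ x, (f x - c) ^ 2 = f x ^ 2 - 2 * c * f x + c ^ 2 from fun x => by ring]
    rw [integral_add (f := fun x => f x ^ 2 - 2 * c * f x)
      (hf.integrable_sq.sub (hint.const_mul _)) (integrable_const _),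
      integral_sub hf.integrable_sq (hint.const_mul _), integral_const_mul, integral_const,
      smul_eq_mul, mul_comm (c ^ 2)]
  rw [sqDeviation, hexpand, average_eq, smul_eq_mul]
  obtain hμ | hμ := eq_or_ne (μ.real Set.univ) 0
  · simp [hμ]
  · field_simp
    ring

lemma sq_integral_le_measureReal_mul {f : α → ℝ} (hf : MemLp f 2 μ) :
    (∫ x, f x ∂μ) ^ 2 ≤ μ.real Set.univ * ∫ x, f x ^ 2 ∂μ := by
  obtain rfl | hμ := eq_zero_or_neZero μ
  · simp
  have hdev := sqDeviation_nonneg μ f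
  rw [sqDeviation_eq hf, sub_nonneg, div_le_iff₀ (measureReal_univ_pos)] at hdev
  linarith

lemma integral_sq_sub_prod {f : α → ℝ} (hf : MemLp f 2 μ) :
    ∫ p, (f p.1 - f p.2) ^ 2 ∂μ.prod μ = 2 * μ.real Set.univ * sqDeviation μ f := by
  obtain rfl | hμ := eq_zero_or_neZero μ
  · simp
  have hint : Integrable f μ := hf.integrable one_le_two
  have hμ' := (measureReal_univ_pos (μ := μ)).ne'
  have hfst : Integrable (fun p : α × α => f p.1 ^ 2) (μ.prod μ) := hf.integrable_sq.comp_fst μ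
  have hsnd : Integrable (fun p : α × α => f p.2 ^ 2) (μ.prod μ) := hf.integrable_sq.comp_snd μ
  have hmul : Integrable (fun p : α × α => f p.1 * f p.2) (μ.prod μ) := hint.mul_prod hint
  simp_rw [show ∀ p : α × α, (f p.1 - f p.2) ^ 2 = f p.1 ^ 2 + f p.2 ^ 2 - 2 * (f p.1 * f p.2)
    from fun p => by ring]
  rw [integral_sub (f := fun p => f p.1 ^ 2 + f p.2 ^ 2) (hfst.add hsnd) (hmul.const_mul 2),
    integral_add hfst hsnd, integral_const_mul, integral_prod_mul,
    integral_fun_fst (fun x => f x ^ 2), integral_fun_snd (fun x => f x ^ 2),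
    sqDeviation_eq hf, smul_eq_mul]
  field_simp
  ring

lemma ae_memLp_two_prodMk_left {f : α × β → ℝ} (hf : MemLp f 2 (μ.prod ν)) :
    ∀ᵐ x ∂μ, MemLp (fun y => f (x, y)) 2 ν := by
  filter_upwards [hf.1.prodMk_left, hf.integrable_sq.prod_right_ae] with x hmeas hsq
  exact (memLp_two_iff_integrable_sq hmeas).2 hsq

lemma ae_sq_integral_le {f : α × β → ℝ} (hf : MemLp f 2 (μ.prod ν)) :
    ∀ᵐ x ∂μ, (∫ y, f (x, y) ∂ν) ^ 2 ≤ ν.real Set.univ * ∫ y, f (x, y) ^ 2 ∂ν :=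
  (ae_memLp_two_prodMk_left hf).mono fun _ hx => sq_integral_le_measureReal_mul hx

lemma memLp_two_integral_prod_left {f : α × β → ℝ} (hf : MemLp f 2 (μ.prod ν)) :
    MemLp (fun x => ∫ y, f (x, y) ∂ν) 2 μ := by
  have hmeas : AEStronglyMeasurable (fun x => ∫ y, f (x, y) ∂ν) μ := hf.1.integral_prod_right'
  refine (memLp_two_iff_integrable_sq hmeas).2 <|
    (hf.integrable_sq.integral_prod_left.const_mul (ν.real Set.univ)).mono' (hmeas.pow 2) ?_
  filter_upwards [ae_sq_integral_le hf] with x hx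
  rwa [norm_of_nonneg (sq_nonneg _)]

lemma integral_sq_integral_le {f : α × β → ℝ} (hf : MemLp f 2 (μ.prod ν)) :
    ∫ x, (∫ y, f (x, y) ∂ν) ^ 2 ∂μ ≤ ν.real Set.univ * ∫ p, f p ^ 2 ∂μ.prod ν := by
  rw [integral_prod _ hf.integrable_sq, ← integral_const_mul]
  exact integral_mono_ae (memLp_two_integral_prod_left hf).integrable_sq
    (hf.integrable_sq.integral_prod_left.const_mul _) (ae_sq_integral_le hf)

lemma memLp_average_prod_snd {f : α × β → ℝ} (hf : MemLp f 2 (μ.prod ν)) :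
    MemLp (fun p : α × β => ⨍ x, f (x, p.2) ∂μ) 2 (μ.prod ν) := by
  simp_rw [average_eq]
  have hswap : MemLp (f ∘ Prod.swap) 2 (ν.prod μ) :=
    hf.comp_measurePreserving Measure.measurePreserving_swap
  exact ((memLp_two_integral_prod_left hswap).const_smul (μ.real Set.univ)⁻¹).comp_snd μ

lemma sqDeviation_integral_le {f : α × β → ℝ} (hf : MemLp f 2 (μ.prod ν)) :
    sqDeviation μ (fun x => ∫ y, f (x, y) ∂ν) ≤
      ν.real Set.univ * ∫ y, sqDeviation μ (fun x => f (x, y)) ∂ν := by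
  have hint : Integrable f (μ.prod ν) := hf.integrable one_le_two
  have hcentered : MemLp (fun p : α × β => f p - ⨍ x, f (x, p.2) ∂μ) 2 (μ.prod ν) :=
    hf.sub (memLp_average_prod_snd hf)
  have haverage : ⨍ x, ∫ y, f (x, y) ∂ν ∂μ = ∫ y, ⨍ x, f (x, y) ∂μ ∂ν := by
    simp_rw [average_eq, integral_smul]
    rw [integral_integral_swap (f := fun x y => f (x, y)) hint]
  have hsub : ∀ᵐ x ∂μ, ∫ y, f (x, y) ∂ν - ⨍ x, ∫ y, f (x, y) ∂ν ∂μ =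
      ∫ y, (f (x, y) - ⨍ x, f (x, y) ∂μ) ∂ν := by
    filter_upwards [hint.prod_right_ae] with x hx
    rw [haverage, integral_sub hx]
    simp_rw [average_eq]
    exact hint.integral_prod_right.smul (μ.real Set.univ)⁻¹
  calc sqDeviation μ (fun x => ∫ y, f (x, y) ∂ν)
      = ∫ x, (∫ y, (f (x, y) - ⨍ x, f (x, y) ∂μ) ∂ν) ^ 2 ∂μ :=
        integral_congr_ae (hsub.mono fun x hx => congrArg (· ^ 2) hx)
    _ ≤ ν.real Set.univ * ∫ p, (f p - ⨍ x, f (x, p.2) ∂μ) ^ 2 ∂μ.prod ν :=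
        integral_sq_integral_le hcentered
    _ = ν.real Set.univ * ∫ y, sqDeviation μ (fun x => f (x, y)) ∂ν := by
        rw [integral_prod_symm _ hcentered.integrable_sq]
        rfl

lemma integral_sqDeviation_eq {f : α × β → ℝ} (hf : MemLp f 2 (μ.prod ν)) :
    ∫ x, sqDeviation ν (fun y => f (x, y)) ∂μ =
      ∫ p, f p ^ 2 ∂μ.prod ν - (∫ x, (∫ y, f (x, y) ∂ν) ^ 2 ∂μ) / ν.real Set.univ := by
  rw [integral_congr_ae ((ae_memLp_two_prodMk_left hf).mono fun x hx => sqDeviation_eq hx),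
    integral_sub hf.integrable_sq.integral_prod_left
      ((memLp_two_integral_prod_left hf).integrable_sq.div_const _),
    integral_div, integral_prod _ hf.integrable_sq]

lemma integral_sqDeviation_le {f : α × β → ℝ} (hf : MemLp f 2 (μ.prod ν)) :
    ∫ x, sqDeviation ν (fun y => f (x, y)) ∂μ ≤ ∫ p, f p ^ 2 ∂μ.prod ν := by
  rw [integral_sqDeviation_eq hf]
  exact sub_le_self _ (div_nonneg (integral_nonneg fun _ => sq_nonneg _) measureReal_nonneg)

lemma sqDeviation_prod_eq {f : α × β → ℝ} (hf : MemLp f 2 (μ.prod ν)) :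
    sqDeviation (μ.prod ν) f = ∫ x, sqDeviation ν (fun y => f (x, y)) ∂μ +
      sqDeviation μ (fun x => ∫ y, f (x, y) ∂ν) / ν.real Set.univ := by
  rw [sqDeviation_eq hf, integral_sqDeviation_eq hf,
    sqDeviation_eq (memLp_two_integral_prod_left hf), ← integral_prod _ (hf.integrable one_le_two),
    ← Set.univ_prod_univ, measureReal_prod_prod]
  ring

lemma sqDeviation_prod_le {f : α × β → ℝ} (hf : MemLp f 2 (μ.prod ν)) :
    sqDeviation (μ.prod ν) f ≤ ∫ x, sqDeviation ν (fun y => f (x, y)) ∂μ +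
      ∫ y, sqDeviation μ (fun x => f (x, y)) ∂ν := by
  rw [sqDeviation_prod_eq hf]
  gcongr
  exact div_le_of_le_mul₀ measureReal_nonneg (integral_nonneg fun _ => sqDeviation_nonneg _ _)
    (by linarith [sqDeviation_integral_le hf])

lemma memLp_two_sub_prod {f : α × β → ℝ} (hf : MemLp f 2 (μ.prod ν)) :
    MemLp (fun p : α × β × β => f (p.1, p.2.1) - f (p.1, p.2.2)) 2 (μ.prod (ν.prod ν)) := by
  have hfst : MemLp (fun p : α × β × β => f (p.1, p.2.1)) 2 (μ.prod (ν.prod ν)) :=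
    (hf.comp_fst ν).comp_measurePreserving (measurePreserving_prodAssoc μ ν ν).symm
  exact hfst.sub (hfst.comp_measurePreserving
    ((MeasurePreserving.id μ).prod Measure.measurePreserving_swap))

lemma integral_sq_sub_prod_prod {f : α × β → ℝ} (hf : MemLp f 2 (μ.prod ν)) :
    ∫ p, (f (p.1, p.2.1) - f (p.1, p.2.2)) ^ 2 ∂μ.prod (ν.prod ν) =
      2 * ν.real Set.univ * ∫ x, sqDeviation ν (fun y => f (x, y)) ∂μ := by
  rw [integral_prod _ (memLp_two_sub_prod hf).integrable_sq, ← integral_const_mul]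
  exact integral_congr_ae ((ae_memLp_two_prodMk_left hf).mono fun x hx => integral_sq_sub_prod hx)

end SqDeviation

section Cylinder

variable {β : Type*}

/-- The partial derivative in the first, real variable of a function on a cylinder `ℝ × β`. The
cross section `β` carries no structure. -/
noncomputable def derivFst (u : ℝ × β → ℝ) (p : ℝ × β) : ℝ :=
  deriv (fun x => u (x, p.2)) p.1

variable [MeasurableSpace β] {ν : Measure β} {a b k : ℝ}

lemma mul_tanh_mul_integral_sq_le [SFinite ν] {v : ℝ × β → ℝ} (hab : a ≤ b)
    (hv : ∀ y, ContDiff ℝ 1 fun x => v (x, y)) (hva : MemLp (fun y => v (a, y)) 2 ν)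
    (hv_memLp : MemLp v 2 ((volume.restrict (Set.Ioo a b)).prod ν))
    (hv'_memLp : MemLp (derivFst v) 2 ((volume.restrict (Set.Ioo a b)).prod ν)) :
    k * tanh (k * (b - a)) * ∫ y, v (a, y) ^ 2 ∂ν ≤
      ∫ p, (derivFst v p ^ 2 + k ^ 2 * v p ^ 2) ∂(volume.restrict (Set.Ioo a b)).prod ν := by
  have hint : Integrable (fun p => derivFst v p ^ 2 + k ^ 2 * v p ^ 2)
      ((volume.restrict (Set.Ioo a b)).prod ν) :=
    hv'_memLp.integrable_sq.add (hv_memLp.integrable_sq.const_mul _)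
  rw [integral_prod_symm _ hint, ← integral_const_mul]
  refine integral_mono (hva.integrable_sq.const_mul _) hint.integral_prod_right fun y => ?_
  change _ ≤ ∫ x in Set.Ioo a b, _
  rw [← integral_Ioc_eq_integral_Ioo, ← intervalIntegral.integral_of_le hab]
  exact mul_tanh_mul_sq_le_integral hab (hv y)

/-- The difference `u (x, y) - u (x, y')`, as a function on the cylinder over pairs `(y, y')`,
turns the inequality for squares into one for deviations. -/
lemma mul_tanh_mul_sqDeviation_le [IsFiniteMeasure ν] {u : ℝ × β → ℝ} (hab : a ≤ b)
    (hu : ∀ y, ContDiff ℝ 1 fun x => u (x, y)) (hua : MemLp (fun y => u (a, y)) 2 ν)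
    (hu_memLp : MemLp u 2 ((volume.restrict (Set.Ioo a b)).prod ν))
    (hu'_memLp : MemLp (derivFst u) 2 ((volume.restrict (Set.Ioo a b)).prod ν)) :
    k * tanh (k * (b - a)) * sqDeviation ν (fun y => u (a, y)) ≤
      (∫ x in Set.Ioo a b, sqDeviation ν (fun y => derivFst u (x, y))) +
        k ^ 2 * ∫ x in Set.Ioo a b, sqDeviation ν (fun y => u (x, y)) := by
  obtain rfl | hν := eq_zero_or_neZero ν
  · simp [sqDeviation]
  set v : ℝ × β × β → ℝ := fun p => u (p.1, p.2.1) - u (p.1, p.2.2)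
  have hv' : derivFst v = fun p => derivFst u (p.1, p.2.1) - derivFst u (p.1, p.2.2) :=
    funext fun p => deriv_sub ((hu p.2.1).differentiable one_ne_zero p.1)
      ((hu p.2.2).differentiable one_ne_zero p.1)
  have hv_memLp := memLp_two_sub_prod hu_memLp
  have hv'_memLp := memLp_two_sub_prod hu'_memLp
  have hpairs := mul_tanh_mul_integral_sq_le (k := k) (v := v) hab
    (fun y => (hu y.1).sub (hu y.2)) ((hua.comp_fst ν).sub (hua.comp_snd ν)) hv_memLp
    (hv' ▸ hv'_memLp)
  rw [hv', integral_add hv'_memLp.integrable_sq (hv_memLp.integrable_sq.const_mul _),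
    integral_const_mul, integral_sq_sub_prod hua, integral_sq_sub_prod_prod hu_memLp,
    integral_sq_sub_prod_prod hu'_memLp] at hpairs
  have hpos : 0 < 2 * ν.real Set.univ := mul_pos two_pos measureReal_univ_pos
  refine le_of_mul_le_mul_left ?_ hpos
  linarith

/-- `g` plays the role of the squared gradient along the cross section, on which the Poincaré
inequality with constant `k ^ 2` is assumed. -/
theorem mul_tanh_mul_sqDeviation_le_of_poincare [IsFiniteMeasure ν] {u g : ℝ × β → ℝ}
    (hab : a ≤ b) (hu : ∀ y, ContDiff ℝ 1 fun x => u (x, y)) (hua : MemLp (fun y => u (a, y)) 2 ν)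
    (hu_memLp : MemLp u 2 ((volume.restrict (Set.Ioo a b)).prod ν))
    (hu'_memLp : MemLp (derivFst u) 2 ((volume.restrict (Set.Ioo a b)).prod ν))
    (hg : Integrable g ((volume.restrict (Set.Ioo a b)).prod ν))
    (hpoincare : ∀ x, k ^ 2 * sqDeviation ν (fun y => u (x, y)) ≤ ∫ y, g (x, y) ∂ν) :
    k * tanh (k * (b - a)) * sqDeviation ν (fun y => u (a, y)) ≤
      ∫ p, (derivFst u p ^ 2 + g p) ∂(volume.restrict (Set.Ioo a b)).prod ν := by
  rw [integral_add hu'_memLp.integrable_sq hg]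
  refine (mul_tanh_mul_sqDeviation_le hab hu hua hu_memLp hu'_memLp).trans (add_le_add ?_ ?_)
  · exact integral_sqDeviation_le hu'_memLp
  · rw [integral_prod _ hg, ← integral_const_mul]
    exact integral_mono_of_nonneg
      (.of_forall fun x => mul_nonneg (sq_nonneg k) (sqDeviation_nonneg _ _))
      hg.integral_prod_left (.of_forall hpoincare)

end Cylinder

section Rectangle

/-- The partial derivative in the second, real variable of a function on `α × ℝ`. -/
noncomputable def derivSnd {α : Type*} (f : α × ℝ → ℝ) (q : α × ℝ) : ℝ :=
  deriv (fun y => f (q.1, y)) q.2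

/-- The squared Euclidean norm of the gradient on the plane. It is written with partial derivatives
because the norm of `ℝ × ℝ` is the sup norm. -/
noncomputable def planarGradSq (f : ℝ × ℝ → ℝ) (q : ℝ × ℝ) : ℝ :=
  derivFst f q ^ 2 + derivSnd f q ^ 2

variable {E : Type*} [NormedAddCommGroup E] [NormedSpace ℝ E]

lemma derivFst_eq_fderiv {f : ℝ × E → ℝ} (hf : Differentiable ℝ f) (p : ℝ × E) :
    derivFst f p = fderiv ℝ f p (1, 0) :=
  ((hf p).hasFDerivAt.comp_hasDerivAt p.1
    ((hasDerivAt_id p.1).prodMk (hasDerivAt_const p.1 p.2))).deriv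

lemma derivSnd_eq_fderiv {f : E × ℝ → ℝ} (hf : Differentiable ℝ f) (p : E × ℝ) :
    derivSnd f p = fderiv ℝ f p (0, 1) :=
  ((hf p).hasFDerivAt.comp_hasDerivAt p.2
    ((hasDerivAt_const p.2 p.1).prodMk (hasDerivAt_id p.2))).deriv

lemma continuous_derivFst {f : ℝ × E → ℝ} (hf : ContDiff ℝ 1 f) : Continuous (derivFst f) := by
  rw [funext (derivFst_eq_fderiv (hf.differentiable one_ne_zero))]
  exact (hf.continuous_fderiv one_ne_zero).clm_apply continuous_const

lemma continuous_derivSnd {f : E × ℝ → ℝ} (hf : ContDiff ℝ 1 f) : Continuous (derivSnd f) := by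
  rw [funext (derivSnd_eq_fderiv (hf.differentiable one_ne_zero))]
  exact (hf.continuous_fderiv one_ne_zero).clm_apply continuous_const

lemma memLp_restrict_of_isBounded {X : Type*} [PseudoMetricSpace X] [ProperSpace X]
    [MeasurableSpace X] [BorelSpace X] {μ : Measure X} [IsFiniteMeasureOnCompacts μ] {s : Set X}
    {f : X → ℝ} (p : ENNReal) (hf : Continuous f) (hs : Bornology.IsBounded s) :
    MemLp f p (μ.restrict s) := by
  have hcompact : IsCompact (closure s) := hs.isCompact_closure
  have : IsFiniteMeasure (μ.restrict (closure s)) := ⟨by simpa using hcompact.measure_lt_top⟩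
  obtain ⟨C, hC⟩ := hcompact.exists_bound_of_continuousOn hf.continuousOn
  exact (MemLp.of_bound hf.aestronglyMeasurable C
    (ae_restrict_of_forall_mem isClosed_closure.measurableSet hC)).mono_measure
    (Measure.restrict_mono subset_closure le_rfl)

variable {a b a₁ b₁ a₂ b₂ k : ℝ}

lemma sq_mul_sqDeviation_Ioo_le {f : ℝ → ℝ} (hab : a ≤ b) (hk : 0 ≤ k) (hkπ : k * (b - a) ≤ π)
    (hf : ContDiff ℝ 1 f) :
    k ^ 2 * sqDeviation (volume.restrict (Set.Ioo a b)) f ≤ ∫ x in Set.Ioo a b, deriv f x ^ 2 := by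
  set c : ℝ := ⨍ x in Set.Ioo a b, f x
  have hmean : ∫ x in a..b, (f x - c) = 0 := by
    rw [intervalIntegral.integral_of_le hab, integral_Ioc_eq_integral_Ioo]
    exact integral_sub_average _ f
  have hpoincare := integral_sq_le_of_integral_eq_zero hab (hf.sub contDiff_const) hmean
  simp only [deriv_sub_const_fun, intervalIntegral.integral_of_le hab,
    integral_Ioc_eq_integral_Ioo] at hpoincare
  have hscale : k ^ 2 * ((b - a) / π) ^ 2 ≤ 1 := by
    rw [← mul_pow, mul_div_assoc']
    exact pow_le_one₀ (div_nonneg (mul_nonneg hk (sub_nonneg.2 hab)) pi_pos.le)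
      ((div_le_one pi_pos).2 hkπ)
  calc k ^ 2 * sqDeviation (volume.restrict (Set.Ioo a b)) f
      ≤ k ^ 2 * (((b - a) / π) ^ 2 * ∫ x in Set.Ioo a b, deriv f x ^ 2) := by
        gcongr
        exact hpoincare
    _ = k ^ 2 * ((b - a) / π) ^ 2 * ∫ x in Set.Ioo a b, deriv f x ^ 2 := (mul_assoc _ _ _).symm
    _ ≤ ∫ x in Set.Ioo a b, deriv f x ^ 2 :=
        mul_le_of_le_one_left (integral_nonneg fun _ => sq_nonneg _) hscale

lemma sq_mul_sqDeviation_rectangle_le {f : ℝ × ℝ → ℝ} (hab₁ : a₁ ≤ b₁) (hab₂ : a₂ ≤ b₂)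
    (hk : 0 ≤ k) (hkπ₁ : k * (b₁ - a₁) ≤ π) (hkπ₂ : k * (b₂ - a₂) ≤ π) (hf : ContDiff ℝ 1 f) :
    k ^ 2 * sqDeviation (volume.restrict (Set.Ioo a₁ b₁ ×ˢ Set.Ioo a₂ b₂)) f ≤
      ∫ q in Set.Ioo a₁ b₁ ×ˢ Set.Ioo a₂ b₂, planarGradSq f q := by
  have hmemLp : ∀ g : ℝ × ℝ → ℝ, Continuous g →
      MemLp g 2 ((volume.restrict (Set.Ioo a₁ b₁)).prod (volume.restrict (Set.Ioo a₂ b₂))) := by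
    intro g hg
    rw [Measure.prod_restrict]
    exact memLp_restrict_of_isBounded 2 hg
      ((Metric.isBounded_Ioo _ _).prod (Metric.isBounded_Ioo _ _))
  have hfst := (hmemLp _ (continuous_derivFst hf)).integrable_sq
  have hsnd := (hmemLp _ (continuous_derivSnd hf)).integrable_sq
  rw [Measure.volume_eq_prod, ← Measure.prod_restrict]
  simp only [planarGradSq]
  rw [integral_add hfst hsnd, integral_prod_symm _ hfst, integral_prod _ hsnd]
  refine (mul_le_mul_of_nonneg_left (sqDeviation_prod_le (hmemLp f hf.continuous))
    (sq_nonneg k)).trans ?_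
  rw [mul_add, add_comm, ← integral_const_mul, ← integral_const_mul]
  refine add_le_add (integral_mono_of_nonneg ?_ hfst.integral_prod_right (.of_forall fun y => ?_))
    (integral_mono_of_nonneg ?_ hsnd.integral_prod_left (.of_forall fun x => ?_))
  · exact .of_forall fun y => mul_nonneg (sq_nonneg k) (sqDeviation_nonneg _ _)
  · exact sq_mul_sqDeviation_Ioo_le hab₁ hk hkπ₁ (by fun_prop)
  · exact .of_forall fun x => mul_nonneg (sq_nonneg k) (sqDeviation_nonneg _ _)
  · exact sq_mul_sqDeviation_Ioo_le hab₂ hk hkπ₂ (by fun_prop)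

end Rectangle

section Box

/-- The squared Euclidean norm of the gradient on `ℝ × ℝ × ℝ`. -/
noncomputable def spatialGradSq (u : ℝ × ℝ × ℝ → ℝ) (p : ℝ × ℝ × ℝ) : ℝ :=
  derivFst u p ^ 2 + planarGradSq (fun q => u (p.1, q)) p.2

lemma continuous_planarGradSq_slice {u : ℝ × ℝ × ℝ → ℝ} (hu : ContDiff ℝ 1 u) :
    Continuous fun p : ℝ × ℝ × ℝ => planarGradSq (fun q => u (p.1, q)) p.2 := by
  have hfst : ∀ p : ℝ × ℝ × ℝ, derivFst (fun q => u (p.1, q)) p.2 = fderiv ℝ u p (0, 1, 0) :=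
    fun p => ((hu.differentiable one_ne_zero p).hasFDerivAt.comp_hasDerivAt p.2.1
      ((hasDerivAt_const _ _).prodMk ((hasDerivAt_id _).prodMk (hasDerivAt_const _ _)))).deriv
  have hsnd : ∀ p : ℝ × ℝ × ℝ, derivSnd (fun q => u (p.1, q)) p.2 = fderiv ℝ u p (0, 0, 1) :=
    fun p => ((hu.differentiable one_ne_zero p).hasFDerivAt.comp_hasDerivAt p.2.2
      ((hasDerivAt_const _ _).prodMk ((hasDerivAt_const _ _).prodMk (hasDerivAt_id _)))).deriv
  have : Continuous (fderiv ℝ u) := hu.continuous_fderiv one_ne_zero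
  simp only [planarGradSq, hfst, hsnd]
  fun_prop

theorem mul_tanh_mul_integral_face_sq_le {u : ℝ × ℝ × ℝ → ℝ} {a b a₁ b₁ a₂ b₂ k : ℝ} (hab : a ≤ b)
    (hab₁ : a₁ ≤ b₁) (hab₂ : a₂ ≤ b₂) (hk : 0 ≤ k) (hkπ₁ : k * (b₁ - a₁) ≤ π)
    (hkπ₂ : k * (b₂ - a₂) ≤ π) (hu : ContDiff ℝ 1 u)
    (hu0 : ∫ q in Set.Ioo a₁ b₁ ×ˢ Set.Ioo a₂ b₂, u (a, q) = 0) :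
    k * tanh (k * (b - a)) * ∫ q in Set.Ioo a₁ b₁ ×ˢ Set.Ioo a₂ b₂, u (a, q) ^ 2 ≤
      ∫ p in Set.Ioo a b ×ˢ Set.Ioo a₁ b₁ ×ˢ Set.Ioo a₂ b₂, spatialGradSq u p := by
  set R := Set.Ioo a₁ b₁ ×ˢ Set.Ioo a₂ b₂
  have hR : Bornology.IsBounded R := (Metric.isBounded_Ioo _ _).prod (Metric.isBounded_Ioo _ _)
  have : IsFiniteMeasure (volume.restrict R) := ⟨by simpa using hR.measure_lt_top⟩
  have hmemLp : ∀ (g : ℝ × ℝ × ℝ → ℝ) (r : ENNReal), Continuous g →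
      MemLp g r ((volume.restrict (Set.Ioo a b)).prod (volume.restrict R)) := by
    intro g r hg
    rw [Measure.prod_restrict]
    exact memLp_restrict_of_isBounded r hg ((Metric.isBounded_Ioo _ _).prod hR)
  rw [← sqDeviation_of_integral_eq_zero hu0, Measure.volume_eq_prod ℝ (ℝ × ℝ),
    ← Measure.prod_restrict]
  exact mul_tanh_mul_sqDeviation_le_of_poincare hab (fun y => by fun_prop)
    (memLp_restrict_of_isBounded 2 (by fun_prop) hR) (hmemLp u 2 hu.continuous)
    (hmemLp _ 2 (continuous_derivFst hu))
    (memLp_one_iff_integrable.1 (hmemLp _ 1 (continuous_planarGradSq_slice hu)))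
    fun x => sq_mul_sqDeviation_rectangle_le hab₁ hab₂ hk hkπ₁ hkπ₂ (by fun_prop)

end Box

section Euclidean

/-- The identification of `ℝ × ℝ × ℝ` with Euclidean space that forgets the bracketing. -/
noncomputable def prodEquivEuclidean : ℝ × ℝ × ℝ ≃ᵐ EuclideanSpace ℝ (Fin 3) :=
  (((MeasurableEquiv.refl ℝ).prodCongr MeasurableEquiv.finTwoArrow.symm).trans
    (MeasurableEquiv.piFinSuccAbove (fun _ : Fin 3 => ℝ) 0).symm).trans
      (MeasurableEquiv.toLp 2 (Fin 3 → ℝ))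

lemma prodEquivEuclidean_apply (p : ℝ × ℝ × ℝ) :
    prodEquivEuclidean p = !₂[p.1, p.2.1, p.2.2] := by
  ext i
  fin_cases i <;> rfl

lemma measurePreserving_prodEquivEuclidean : MeasurePreserving prodEquivEuclidean :=
  (EuclideanSpace.volume_preserving_symm_measurableEquiv_toLp (Fin 3)).symm.comp
    ((volume_preserving_piFinSuccAbove (fun _ : Fin 3 => ℝ) 0).symm.comp
      ((MeasurePreserving.id volume).prod (volume_preserving_finTwoArrow ℝ).symm))

lemma setIntegral_euclidean_eq_prod (F : EuclideanSpace ℝ (Fin 3) → ℝ) (s₀ s₁ s₂ : Set ℝ) :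
    ∫ x in {x : EuclideanSpace ℝ (Fin 3) | x 0 ∈ s₀ ∧ x 1 ∈ s₁ ∧ x 2 ∈ s₂}, F x =
      ∫ p in s₀ ×ˢ s₁ ×ˢ s₂, F !₂[p.1, p.2.1, p.2.2] := by
  rw [← measurePreserving_prodEquivEuclidean.setIntegral_preimage_emb
    prodEquivEuclidean.measurableEmbedding]
  simp only [prodEquivEuclidean_apply]
  rfl

lemma hasDerivAt_euclidean_vec {x y z : ℝ → ℝ} {x' y' z' t : ℝ} (hx : HasDerivAt x x' t)
    (hy : HasDerivAt y y' t) (hz : HasDerivAt z z' t) :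
    HasDerivAt (fun t => (!₂[x t, y t, z t] : EuclideanSpace ℝ (Fin 3))) !₂[x', y', z'] t := by
  refine (PiLp.continuousLinearEquiv 2 ℝ fun _ : Fin 3 => ℝ).symm.hasFDerivAt.comp_hasDerivAt t
    (hasDerivAt_pi.2 fun i => ?_)
  fin_cases i
  exacts [hx, hy, hz]

lemma contDiff_euclidean_vec {n : WithTop ℕ∞} :
    ContDiff ℝ n fun p : ℝ × ℝ × ℝ => (!₂[p.1, p.2.1, p.2.2] : EuclideanSpace ℝ (Fin 3)) := by
  refine contDiff_euclidean.2 fun i => ?_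
  fin_cases i
  exacts [contDiff_fst, contDiff_fst.comp contDiff_snd, contDiff_snd.comp contDiff_snd]

lemma norm_gradient_sq_eq_sum_fderiv (w : EuclideanSpace ℝ (Fin 3) → ℝ)
    (x : EuclideanSpace ℝ (Fin 3)) :
    ‖gradient w x‖ ^ 2 = fderiv ℝ w x !₂[1, 0, 0] ^ 2 +
      (fderiv ℝ w x !₂[0, 1, 0] ^ 2 + fderiv ℝ w x !₂[0, 0, 1] ^ 2) := by
  simp [EuclideanSpace.real_norm_sq_eq, Fin.sum_univ_three, ← inner_gradient_left,
    PiLp.inner_apply, add_assoc]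

lemma norm_gradient_sq_eq_spatialGradSq {w : EuclideanSpace ℝ (Fin 3) → ℝ}
    (hw : Differentiable ℝ w) (p : ℝ × ℝ × ℝ) :
    ‖gradient w !₂[p.1, p.2.1, p.2.2]‖ ^ 2 =
      spatialGradSq (fun p => w !₂[p.1, p.2.1, p.2.2]) p := by
  obtain ⟨x, y, z⟩ := p
  have hw' := (hw !₂[x, y, z]).hasFDerivAt
  have hx := hw'.comp_hasDerivAt x
    (hasDerivAt_euclidean_vec (hasDerivAt_id x) (hasDerivAt_const x y) (hasDerivAt_const x z))
  have hy := hw'.comp_hasDerivAt y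
    (hasDerivAt_euclidean_vec (hasDerivAt_const y x) (hasDerivAt_id y) (hasDerivAt_const y z))
  have hz := hw'.comp_hasDerivAt z
    (hasDerivAt_euclidean_vec (hasDerivAt_const z x) (hasDerivAt_const z y) (hasDerivAt_id z))
  rw [norm_gradient_sq_eq_sum_fderiv, ← hx.deriv, ← hy.deriv, ← hz.deriv]
  rfl

lemma setIntegral_norm_gradient_sq {w : EuclideanSpace ℝ (Fin 3) → ℝ} (hw : Differentiable ℝ w)
    (s₀ s₁ s₂ : Set ℝ) :
    ∫ x in {x : EuclideanSpace ℝ (Fin 3) | x 0 ∈ s₀ ∧ x 1 ∈ s₁ ∧ x 2 ∈ s₂}, ‖gradient w x‖ ^ 2 =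
      ∫ p in s₀ ×ˢ s₁ ×ˢ s₂, spatialGradSq (fun p => w !₂[p.1, p.2.1, p.2.2]) p := by
  simp only [setIntegral_euclidean_eq_prod, norm_gradient_sq_eq_spatialGradSq hw]

end Euclidean

section Sharpness

/-- `c` is a nonzero function of mean zero on `R` for which the Poincaré inequality with constant
`k ^ 2` is an equality, as it is for a Neumann eigenfunction with eigenvalue `k ^ 2`. -/
structure IsPoincareExtremal (R : Set (ℝ × ℝ)) (k : ℝ) (c : ℝ × ℝ → ℝ) : Prop where
  contDiff : ContDiff ℝ 1 c
  integral_eq_zero : ∫ q in R, c q = 0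
  integral_sq_pos : 0 < ∫ q in R, c q ^ 2
  integral_planarGradSq : ∫ q in R, planarGradSq c q = k ^ 2 * ∫ q in R, c q ^ 2

lemma integral_cos_pi_div_mul {h : ℝ} (hh : 0 < h) : ∫ y in Set.Ioo 0 h, cos (π / h * y) = 0 := by
  rw [← integral_Ioc_eq_integral_Ioo, ← intervalIntegral.integral_of_le hh.le,
    intervalIntegral.integral_comp_mul_left cos (div_pos pi_pos hh).ne', div_mul_cancel₀ _ hh.ne']
  simp

lemma integral_cos_sq_pi_div_mul {h : ℝ} (hh : 0 < h) :
    ∫ y in Set.Ioo 0 h, cos (π / h * y) ^ 2 = h / 2 := by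
  rw [← integral_Ioc_eq_integral_Ioo, ← intervalIntegral.integral_of_le hh.le,
    intervalIntegral.integral_comp_mul_left (cos · ^ 2) (div_pos pi_pos hh).ne',
    div_mul_cancel₀ _ hh.ne', integral_cos_sq]
  simp [field]

lemma integral_sin_sq_pi_div_mul {h : ℝ} (hh : 0 < h) :
    ∫ y in Set.Ioo 0 h, sin (π / h * y) ^ 2 = h / 2 := by
  rw [← integral_Ioc_eq_integral_Ioo, ← intervalIntegral.integral_of_le hh.le,
    intervalIntegral.integral_comp_mul_left (sin · ^ 2) (div_pos pi_pos hh).ne',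
    div_mul_cancel₀ _ hh.ne', integral_sin_sq]
  simp [field]

lemma setIntegral_prod_fun_fst (g : ℝ → ℝ) {s t : Set ℝ} :
    ∫ q in s ×ˢ t, g q.1 = volume.real t * ∫ y in s, g y := by
  rw [Measure.volume_eq_prod, ← Measure.prod_restrict, integral_fun_fst, smul_eq_mul,
    measureReal_restrict_apply_univ]

lemma planarGradSq_comp_fst (g : ℝ → ℝ) (q : ℝ × ℝ) :
    planarGradSq (fun q => g q.1) q = deriv g q.1 ^ 2 := by
  simp [planarGradSq, derivFst, derivSnd]

lemma isPoincareExtremal_cos_fst {h₂ h₃ : ℝ} (hh₂ : 0 < h₂) (hh₃ : 0 < h₃) :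
    IsPoincareExtremal (Set.Ioo 0 h₂ ×ˢ Set.Ioo 0 h₃) (π / h₂) fun q => cos (π / h₂ * q.1) where
  contDiff := by fun_prop
  integral_eq_zero := by
    rw [setIntegral_prod_fun_fst fun y => cos (π / h₂ * y), integral_cos_pi_div_mul hh₂, mul_zero]
  integral_sq_pos := by
    rw [setIntegral_prod_fun_fst fun y => cos (π / h₂ * y) ^ 2, integral_cos_sq_pi_div_mul hh₂]
    simp [hh₂, hh₃]
  integral_planarGradSq := by
    have hgrad : ∀ q : ℝ × ℝ, planarGradSq (fun q => cos (π / h₂ * q.1)) q =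
        (π / h₂) ^ 2 * sin (π / h₂ * q.1) ^ 2 := fun q => by
      rw [planarGradSq_comp_fst fun y => cos (π / h₂ * y),
        ((hasDerivAt_id' q.1).const_mul (π / h₂)).cos.deriv]
      ring
    simp only [hgrad, integral_const_mul]
    rw [setIntegral_prod_fun_fst fun y => sin (π / h₂ * y) ^ 2,
      setIntegral_prod_fun_fst fun y => cos (π / h₂ * y) ^ 2, integral_sin_sq_pi_div_mul hh₂,
      integral_cos_sq_pi_div_mul hh₂]

lemma IsPoincareExtremal.comp_swap {s t : Set ℝ} {k : ℝ} {c : ℝ × ℝ → ℝ}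
    (hc : IsPoincareExtremal (s ×ˢ t) k c) : IsPoincareExtremal (t ×ˢ s) k (c ∘ Prod.swap) := by
  have hswap : ∀ f : ℝ × ℝ → ℝ, ∫ q in t ×ˢ s, f q.swap = ∫ q in s ×ˢ t, f q :=
    setIntegral_prod_swap s t
  have hgrad : ∀ q, planarGradSq (c ∘ Prod.swap) q = planarGradSq c q.swap := fun q => add_comm _ _
  refine ⟨hc.contDiff.comp (contDiff_snd.prodMk contDiff_fst), (hswap c).trans hc.integral_eq_zero,
    (hswap fun q => c q ^ 2) ▸ hc.integral_sq_pos, ?_⟩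
  simp only [hgrad, hswap (planarGradSq c), hc.integral_planarGradSq, Function.comp_apply,
    hswap fun q => c q ^ 2]

lemma exists_isPoincareExtremal {h₂ h₃ : ℝ} (hh₂ : 0 < h₂) (hh₃ : 0 < h₃) :
    ∃ c, IsPoincareExtremal (Set.Ioo 0 h₂ ×ˢ Set.Ioo 0 h₃) (π / max h₂ h₃) c := by
  obtain hle | hle := le_total h₃ h₂
  · rw [max_eq_left hle]
    exact ⟨_, isPoincareExtremal_cos_fst hh₂ hh₃⟩
  · rw [max_eq_right hle]
    exact ⟨_, (isPoincareExtremal_cos_fst hh₃ hh₂).comp_swap⟩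

lemma integral_sinh_sq_add_cosh_sq {a b k : ℝ} (hab : a ≤ b) :
    k ^ 2 * ((∫ x in Set.Ioo a b, sinh (k * (b - x)) ^ 2) +
        ∫ x in Set.Ioo a b, cosh (k * (b - x)) ^ 2) =
      k * sinh (k * (b - a)) * cosh (k * (b - a)) := by
  have hderiv : ∀ x ∈ Set.uIcc a b,
      HasDerivAt (fun x => -(k * sinh (k * (b - x)) * cosh (k * (b - x))))
        (k ^ 2 * (sinh (k * (b - x)) ^ 2 + cosh (k * (b - x)) ^ 2)) x := fun x _ => by
    have harg := hasDerivAt_mul_sub k b x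
    refine ((harg.sinh.const_mul k).mul harg.cosh).neg.congr_deriv ?_
    ring
  have hFTC := intervalIntegral.integral_eq_sub_of_hasDerivAt hderiv
    (Continuous.intervalIntegrable (by fun_prop) _ _)
  simp only [← integral_Ioc_eq_integral_Ioo, ← intervalIntegral.integral_of_le hab]
  rw [← intervalIntegral.integral_add (Continuous.intervalIntegrable (by fun_prop) _ _)
    (Continuous.intervalIntegrable (by fun_prop) _ _), ← intervalIntegral.integral_const_mul, hFTC]
  simp

lemma spatialGradSq_cosh_mul (b k : ℝ) (c : ℝ × ℝ → ℝ) (p : ℝ × ℝ × ℝ) :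
    spatialGradSq (fun p => cosh (k * (b - p.1)) * c p.2) p =
      k ^ 2 * (sinh (k * (b - p.1)) ^ 2 * c p.2 ^ 2) +
        cosh (k * (b - p.1)) ^ 2 * planarGradSq c p.2 := by
  simp only [spatialGradSq, planarGradSq, derivFst, derivSnd, deriv_const_mul_field,
    ((hasDerivAt_mul_sub k b p.1).cosh.mul_const (c p.2)).deriv]
  ring

lemma IsPoincareExtremal.integral_spatialGradSq_cosh_mul {R : Set (ℝ × ℝ)} {a b k : ℝ}
    {c : ℝ × ℝ → ℝ} (hR : Bornology.IsBounded R) (hc : IsPoincareExtremal R k c) (hab : a ≤ b) :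
    ∫ p in Set.Ioo a b ×ˢ R, spatialGradSq (fun p => cosh (k * (b - p.1)) * c p.2) p =
      k * tanh (k * (b - a)) * ∫ q in R, (cosh (k * (b - a)) * c q) ^ 2 := by
  have hgrad : Continuous (planarGradSq c) :=
    ((continuous_derivFst hc.contDiff).pow 2).add ((continuous_derivSnd hc.contDiff).pow 2)
  have hcont : Continuous c := hc.contDiff.continuous
  have hint : ∀ g : ℝ × ℝ × ℝ → ℝ, Continuous g →
      Integrable g ((volume.prod volume).restrict (Set.Ioo a b ×ˢ R)) := fun g hg =>
    memLp_one_iff_integrable.1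
      (memLp_restrict_of_isBounded 1 hg ((Metric.isBounded_Ioo a b).prod hR))
  simp only [spatialGradSq_cosh_mul, mul_pow, integral_const_mul]
  rw [Measure.volume_eq_prod ℝ (ℝ × ℝ), integral_add (hint _ (by fun_prop)) (hint _ (by fun_prop)),
    integral_const_mul, setIntegral_prod_mul (fun x => sinh (k * (b - x)) ^ 2) (fun q => c q ^ 2),
    setIntegral_prod_mul (fun x => cosh (k * (b - x)) ^ 2), hc.integral_planarGradSq,
    tanh_eq_sinh_div_cosh]
  have := (cosh_pos (k * (b - a))).ne'
  field_simp
  linear_combination (∫ q in R, c q ^ 2) * integral_sinh_sq_add_cosh_sq (k := k) hab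

lemma IsPoincareExtremal.exists_trace_extremal {s t : Set ℝ} {k h : ℝ} {c : ℝ × ℝ → ℝ}
    (hs : Bornology.IsBounded s) (ht : Bornology.IsBounded t)
    (hc : IsPoincareExtremal (s ×ˢ t) k c) (hh : 0 ≤ h) :
    ∃ w : EuclideanSpace ℝ (Fin 3) → ℝ, ContDiff ℝ 1 w ∧
      ∫ q in s ×ˢ t, w !₂[0, q.1, q.2] = 0 ∧ 0 < ∫ q in s ×ˢ t, w !₂[0, q.1, q.2] ^ 2 ∧
      ∫ x in {x : EuclideanSpace ℝ (Fin 3) | x 0 ∈ Set.Ioo 0 h ∧ x 1 ∈ s ∧ x 2 ∈ t},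
          ‖gradient w x‖ ^ 2 =
        k * tanh (k * h) * ∫ q in s ×ˢ t, w !₂[0, q.1, q.2] ^ 2 := by
  set w : EuclideanSpace ℝ (Fin 3) → ℝ := fun x => cosh (k * (h - x 0)) * c (x 1, x 2)
  have hw : ContDiff ℝ 1 w := by
    have hc_contDiff := hc.contDiff
    have : ContDiff ℝ 1 cosh := contDiff_cosh
    fun_prop
  have hw_vec : ∀ x y z, w !₂[x, y, z] = cosh (k * (h - x)) * c (y, z) := fun x y z => rfl
  have henergy := hc.integral_spatialGradSq_cosh_mul (hs.prod ht) hh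
  refine ⟨w, hw, ?_, ?_, ?_⟩
  · simp only [hw_vec, integral_const_mul, hc.integral_eq_zero, mul_zero]
  · simp only [hw_vec, mul_pow, integral_const_mul]
    exact mul_pos (pow_pos (cosh_pos _) 2) hc.integral_sq_pos
  · rw [setIntegral_norm_gradient_sq (hw.differentiable one_ne_zero)]
    simpa only [hw_vec, sub_zero] using henergy

end Sharpness

lemma tanh_pos_of_pos {x : ℝ} (hx : 0 < x) : 0 < tanh x := by
  rw [tanh_eq_sinh_div_cosh]
  exact div_pos (sinh_pos_iff.2 hx) (cosh_pos x)

lemma sqrt_le_one_div_sqrt_mul_sqrt {κ A B : ℝ} (hκ : 0 < κ) (hAB : κ * A ≤ B) :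
    √A ≤ 1 / √κ * √B := by
  rw [one_div_mul_eq_div, le_div_iff₀ (sqrt_pos.2 hκ), mul_comm, ← sqrt_mul hκ.le]
  exact sqrt_le_sqrt hAB

lemma one_div_sqrt_le_of_sqrt_le_mul_sqrt {κ A C : ℝ} (hκ : 0 < κ) (hA : 0 < A)
    (hC : √A ≤ C * √(κ * A)) : 1 / √κ ≤ C := by
  rw [sqrt_mul hκ.le, ← mul_assoc, le_mul_iff_one_le_left (sqrt_pos.2 hA)] at hC
  rwa [div_le_iff₀ (sqrt_pos.2 hκ)]

/-- The sharp constant `C₂(Ω,Γ)` in `‖w‖_{L²(Γ)} ≤ C₂ ‖∇w‖_{L²(Ω)}` for functions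
with zero mean trace on `Γ`, where `Ω = (0,h₁) × (0,h₂) × (0,h₃)` and
`Γ = ∂Ω ∩ {x₁ = 0}` is one face of the parallelepiped, equals
`((π/m)·tanh(π h₁/m))^(-1/2)` with `m = max {h₂, h₃}`. -/
theorem box_one_face_C2 (h₁ h₂ h₃ : ℝ) (hh₁ : 0 < h₁) (hh₂ : 0 < h₂) (hh₃ : 0 < h₃) :
    IsLeast {C : ℝ |
      ∀ w : EuclideanSpace ℝ (Fin 3) → ℝ, ContDiff ℝ 1 w →
        (∫ p in Set.Ioo (0:ℝ) h₂ ×ˢ Set.Ioo (0:ℝ) h₃, w !₂[0, p.1, p.2]) = 0 →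
        Real.sqrt (∫ p in Set.Ioo (0:ℝ) h₂ ×ˢ Set.Ioo (0:ℝ) h₃,
            (w !₂[0, p.1, p.2]) ^ 2) ≤
          C * Real.sqrt (∫ x in {x : EuclideanSpace ℝ (Fin 3) |
            x 0 ∈ Set.Ioo 0 h₁ ∧ x 1 ∈ Set.Ioo 0 h₂ ∧ x 2 ∈ Set.Ioo 0 h₃},
            ‖gradient w x‖ ^ 2)}
      (1 / Real.sqrt ((π / max h₂ h₃) * Real.tanh (π * h₁ / max h₂ h₃))) := by
  have hm : 0 < max h₂ h₃ := lt_max_of_lt_left hh₂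
  rw [← div_mul_eq_mul_div]
  set k := π / max h₂ h₃ with hk_def
  have hk : 0 < k := div_pos pi_pos hm
  have hkπ : ∀ h ≤ max h₂ h₃, k * (h - 0) ≤ π := fun h hh => by
    rw [sub_zero, hk_def, div_mul_eq_mul_div, div_le_iff₀ hm]
    exact mul_le_mul_of_nonneg_left hh pi_pos.le
  have hκ : 0 < k * tanh (k * h₁) := mul_pos hk (tanh_pos_of_pos (mul_pos hk hh₁))
  refine ⟨fun w hw hw0 => sqrt_le_one_div_sqrt_mul_sqrt hκ ?_, fun C hC => ?_⟩
  · rw [setIntegral_norm_gradient_sq (hw.differentiable one_ne_zero)]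
    simpa using mul_tanh_mul_integral_face_sq_le hh₁.le hh₂.le hh₃.le hk.le
      (hkπ h₂ (le_max_left _ _)) (hkπ h₃ (le_max_right _ _))
      (u := fun p => w !₂[p.1, p.2.1, p.2.2]) (hw.comp contDiff_euclidean_vec) hw0
  · obtain ⟨c, hc⟩ := exists_isPoincareExtremal hh₂ hh₃
    obtain ⟨w, hw, hw0, htrace, henergy⟩ := hc.exists_trace_extremal (Metric.isBounded_Ioo 0 h₂)
      (Metric.isBounded_Ioo 0 h₃) hh₁.le
    exact one_div_sqrt_le_of_sqrt_le_mul_sqrt hκ htrace (henergy ▸ hC w hw hw0)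
end
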